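/- arXiv:2210.00785 — 6 statements merged into one kernel-verified Lean document; each statement's English description precedes it below -/
import Mathlib

section
/- Let χ = t₁⋯t_m be a cycle with start state p in a continuous VASS of dimension d, and let x ∈ ℚ^d. Then p(0) ⇢^{χ^k} p(x) for some k ∈ ℕ if and only if x = 0 or there exist rationals a₁,…,a_m with a_i > 0 for all i and x = ∑_{i=1}^m a_i • ℓ(t_i). (Theorem 1 combined with Lemma 2, stated in coefficient form: Reach(χ*) equals {0} together with all strictly positive rational combinations of the labels occurring along χ.) -/
open Pointwise

/-- A continuous VASS of dimension `d`: a finite set of states `Q`,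
a finite set of transitions `T ⊆ Q × Q`, and a labelling of transitions
by vectors in `ℚ^d`. -/
structure CVASS (d : ℕ) where
  Q : Type
  [deceq : DecidableEq Q]
  [fin : Fintype Q]
  T : Finset (Q × Q)
  label : Q × Q → (Fin d → ℚ)

attribute [instance] CVASS.deceq CVASS.fin

namespace CVASS

variable {d : ℕ} (V : CVASS d)

/-- `V.PathFrom p π q` : the list of transitions `π` is a valid path of `V`
from state `p` to state `q`. -/
inductive PathFrom : V.Q → List (V.Q × V.Q) → V.Q → Prop
  | nil (p : V.Q) : PathFrom p [] p
  | cons {p q r : V.Q} {rest : List (V.Q × V.Q)} :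
      (p, q) ∈ V.T → PathFrom q rest r → PathFrom p ((p, q) :: rest) r

/-- `V.RunFrom p x π q y` : there is a run of `V` lifted from the path `π`,
starting in configuration `p(x)` and ending in configuration `q(y)`, where
each transition is scaled by some rational coefficient in `(0,1]`
(ℚ-semantics: counters may become negative). -/
inductive RunFrom : V.Q → (Fin d → ℚ) → List (V.Q × V.Q) → V.Q → (Fin d → ℚ) → Prop
  | nil (p : V.Q) (x : Fin d → ℚ) : RunFrom p x [] p x
  | cons {p q r : V.Q} {x y : Fin d → ℚ} {α : ℚ} {rest : List (V.Q × V.Q)} :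
      (p, q) ∈ V.T → 0 < α → α ≤ 1 →
      RunFrom q (x + α • V.label (p, q)) rest r y →
      RunFrom p x ((p, q) :: rest) r y

/-- `V.NNRunFrom p x π q y` : as `RunFrom`, but every configuration along the
run (including the first and the last one) must have nonnegative counters
(ℚ≥0-semantics). -/
inductive NNRunFrom : V.Q → (Fin d → ℚ) → List (V.Q × V.Q) → V.Q → (Fin d → ℚ) → Prop
  | nil (p : V.Q) (x : Fin d → ℚ) : (∀ i, 0 ≤ x i) → NNRunFrom p x [] p x
  | cons {p q r : V.Q} {x y : Fin d → ℚ} {α : ℚ} {rest : List (V.Q × V.Q)} :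
      (p, q) ∈ V.T → (∀ i, 0 ≤ x i) → 0 < α → α ≤ 1 →
      NNRunFrom q (x + α • V.label (p, q)) rest r y →
      NNRunFrom p x ((p, q) :: rest) r y

end CVASS

/-- The list of states visited by a path `π` starting at state `p`. -/
def pathStates {Q : Type} (p : Q) (π : List (Q × Q)) : List Q :=
  p :: π.map Prod.snd

/-- A path is simple if it visits no state twice. -/
def SimplePath {Q : Type} (p : Q) (π : List (Q × Q)) : Prop :=
  (pathStates p π).Nodup

/-- A cycle is simple if it is nonempty and visits no state twice, except
that its first state equals its last state. -/
def SimpleCycle {Q : Type} (π : List (Q × Q)) : Prop :=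
  π ≠ [] ∧ (π.map Prod.snd).Nodup

/-- The path `π₀ χ₁^{k₁} π₁ ⋯ χₙ^{kₙ} πₙ` determined by a linear path scheme
`π₀ χ₁* π₁ ⋯ χₙ* πₙ` (given by the paths `πs` and the cycles `χs`) and
exponents `ks`. -/
def lpsConcat {Q : Type} {n : ℕ} (πs : Fin (n + 1) → List (Q × Q))
    (χs : Fin n → List (Q × Q)) (ks : Fin n → ℕ) : List (Q × Q) :=
  πs 0 ++ (List.ofFn fun i : Fin n =>
    (List.replicate (ks i) (χs i)).flatten ++ πs i.succ).flatten

/-!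
Along a path the scaling coefficients are chosen independently, so the displacements realised by
its runs form the Minkowski sum of the half-open segments `(0, 1] • ℓ(t)`. This set is convex, and
iterating the path `k` times adds `k` copies of it, which by convexity amounts to dilating it by
`k`. As `k` grows, the dilations of the box `(0, 1]^m` of coefficients exhaust the open orthant,
while `k = 0` contributes the zero vector.
-/

theorem sum_replicate_of_convex {𝕜 E : Type*} [Field 𝕜] [LinearOrder 𝕜] [IsStrictOrderedRing 𝕜]
    [AddCommGroup E] [Module 𝕜 E] {s : Set E} (hs : Convex 𝕜 s) (hne : s.Nonempty) (k : ℕ) :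
    (List.replicate k s).sum = (k : 𝕜) • s := by
  induction k with
  | zero => rw [List.replicate_zero, List.sum_nil, Nat.cast_zero, Set.zero_smul_set hne]
  | succ k ih =>
    rw [List.replicate_succ', List.sum_append, List.sum_singleton, ih, Nat.cast_succ,
      hs.add_smul k.cast_nonneg zero_le_one, one_smul]

theorem exists_nat_smul_sum_iff_pos_combination {𝕜 E ι : Type*} [Semifield 𝕜] [LinearOrder 𝕜]
    [IsStrictOrderedRing 𝕜] [Archimedean 𝕜] [AddCommMonoid E] [Module 𝕜 E] [Fintype ι]
    (v : ι → E) (x : E) :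
    (∃ (k : ℕ) (a : ι → 𝕜), (∀ i, a i ∈ Set.Ioc 0 1) ∧ x = (k : 𝕜) • ∑ i, a i • v i) ↔
      x = 0 ∨ ∃ a : ι → 𝕜, (∀ i, 0 < a i) ∧ x = ∑ i, a i • v i := by
  constructor
  · rintro ⟨k, a, ha, rfl⟩
    obtain rfl | hk := k.eq_zero_or_pos
    · exact .inl (by rw [Nat.cast_zero, zero_smul])
    · refine .inr ⟨fun i => k * a i, fun i => mul_pos (Nat.cast_pos.2 hk) (ha i).1, ?_⟩
      simp only [Finset.smul_sum, smul_smul]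
  · rintro (rfl | ⟨a, ha, rfl⟩)
    · exact ⟨0, 1, fun _ => ⟨one_pos, le_rfl⟩, by rw [Nat.cast_zero, zero_smul]⟩
    · have sum_nonneg : 0 ≤ ∑ i, a i := Finset.sum_nonneg fun i _ => (ha i).le
      obtain ⟨k, hk⟩ := exists_nat_gt (∑ i, a i)
      have k_pos : (0 : 𝕜) < k := sum_nonneg.trans_lt hk
      have le_k (i : ι) : a i ≤ k :=
        (Finset.single_le_sum (fun j _ => (ha j).le) (Finset.mem_univ i)).trans hk.le
      refine ⟨k, fun i => a i / k,
        fun i => ⟨div_pos (ha i) k_pos, (div_le_one k_pos).2 (le_k i)⟩, ?_⟩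
      simp only [Finset.smul_sum, smul_smul, mul_div_cancel₀ _ k_pos.ne']

namespace CVASS

variable {d : ℕ} {V : CVASS d} {p q r : V.Q} {π σ : List (V.Q × V.Q)}

theorem PathFrom.append (hπ : V.PathFrom p π q) (hσ : V.PathFrom q σ r) :
    V.PathFrom p (π ++ σ) r := by
  induction hπ with
  | nil => exact hσ
  | cons ht _ ih => exact .cons ht (ih hσ)

theorem PathFrom.flatten_replicate (hπ : V.PathFrom p π p) (k : ℕ) :
    V.PathFrom p (List.replicate k π).flatten p := by
  induction k with
  | zero => exact .nil p
  | succ k ih => exact hπ.append ih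

variable (V) in
/-- The paper's `Reach(π)`: the displacements `y - x` of the runs `p(x) ⇢^π q(y)` lifted from a
path `π`. It is encoded as a Minkowski sum of the segments `(0, 1] • ℓ(t)`, one for each occurrence
of a transition `t`, and so makes sense for any list `π`, path or not. -/
def displacements (π : List (V.Q × V.Q)) : Set (Fin d → ℚ) :=
  (π.map fun t => (· • V.label t) '' Set.Ioc (0 : ℚ) 1).sum

theorem displacements_nil : V.displacements [] = 0 := rfl

theorem displacements_cons (t : V.Q × V.Q) (π : List (V.Q × V.Q)) :
    V.displacements (t :: π) = (· • V.label t) '' Set.Ioc (0 : ℚ) 1 + V.displacements π :=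
  List.sum_cons

theorem mem_displacements {w : Fin d → ℚ} :
    w ∈ V.displacements π ↔
      ∃ a : Fin π.length → ℚ, (∀ i, a i ∈ Set.Ioc 0 1) ∧ w = ∑ i, a i • V.label (π.get i) := by
  rw [displacements, ← Fin.sum_univ_fun_getElem, Set.mem_fintype_sum]
  constructor
  · rintro ⟨g, hg, rfl⟩
    choose a ha hag using hg
    exact ⟨a, ha, Finset.sum_congr rfl fun i _ => (hag i).symm⟩
  · rintro ⟨a, ha, rfl⟩
    exact ⟨_, fun i => Set.mem_image_of_mem _ (ha i), rfl⟩

theorem displacements_nonempty (π : List (V.Q × V.Q)) : (V.displacements π).Nonempty :=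
  ⟨_, mem_displacements.2 ⟨1, fun _ => ⟨one_pos, le_rfl⟩, rfl⟩⟩

theorem convex_displacements (π : List (V.Q × V.Q)) : Convex ℚ (V.displacements π) := by
  refine convex_list_sum fun s hs => ?_
  obtain ⟨t, -, rfl⟩ := List.mem_map.1 hs
  exact (convex_Ioc 0 1).linear_image (LinearMap.toSpanSingleton ℚ _ (V.label t))

theorem displacements_flatten_replicate (k : ℕ) (π : List (V.Q × V.Q)) :
    V.displacements (List.replicate k π).flatten = (k : ℚ) • V.displacements π := by
  rw [← sum_replicate_of_convex (convex_displacements π) (displacements_nonempty π)]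
  simp only [displacements, List.map_flatten, List.map_replicate, List.sum_flatten]

theorem RunFrom.pathFrom {x y : Fin d → ℚ} (h : V.RunFrom p x π q y) : V.PathFrom p π q := by
  induction h with
  | nil p => exact .nil p
  | cons ht _ _ _ ih => exact .cons ht ih

theorem RunFrom.sub_mem_displacements {x y : Fin d → ℚ} (h : V.RunFrom p x π q y) :
    y - x ∈ V.displacements π := by
  induction h with
  | nil => rw [sub_self, displacements_nil]; exact Set.zero_mem_zero
  | cons _ hα_pos hα_le _ ih =>
    rw [displacements_cons]
    exact ⟨_, ⟨_, ⟨hα_pos, hα_le⟩, rfl⟩, _, ih, by dsimp only; abel⟩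

theorem PathFrom.runFrom (hπ : V.PathFrom p π q) {w : Fin d → ℚ}
    (hw : w ∈ V.displacements π) (x : Fin d → ℚ) : V.RunFrom p x π q (x + w) := by
  induction hπ generalizing w x with
  | nil p =>
    obtain rfl : w = 0 := hw
    rw [add_zero]
    exact .nil p x
  | cons ht _ ih =>
    rw [displacements_cons] at hw
    obtain ⟨_, ⟨α, hα, rfl⟩, u, hu, rfl⟩ := hw
    exact .cons ht hα.1 hα.2 (add_assoc x _ u ▸ ih hu _)

theorem runFrom_iff {x y : Fin d → ℚ} :
    V.RunFrom p x π q y ↔ V.PathFrom p π q ∧ y - x ∈ V.displacements π :=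
  ⟨fun h => ⟨h.pathFrom, h.sub_mem_displacements⟩,
    fun ⟨hπ, hw⟩ => add_sub_cancel x y ▸ hπ.runFrom hw x⟩

theorem runFrom_flatten_replicate_iff (hπ : V.PathFrom p π p) (k : ℕ) {x y : Fin d → ℚ} :
    V.RunFrom p x (List.replicate k π).flatten p y ↔
      ∃ a : Fin π.length → ℚ, (∀ i, a i ∈ Set.Ioc 0 1) ∧
        y - x = (k : ℚ) • ∑ i, a i • V.label (π.get i) := by
  rw [runFrom_iff, displacements_flatten_replicate, Set.mem_smul_set]
  constructor
  · rintro ⟨-, w, hw, hyx⟩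
    obtain ⟨a, ha, rfl⟩ := mem_displacements.1 hw
    exact ⟨a, ha, hyx.symm⟩
  · rintro ⟨a, ha, hyx⟩
    exact ⟨hπ.flatten_replicate k, _, mem_displacements.2 ⟨a, ha, rfl⟩, hyx.symm⟩

end CVASS

/-- Theorem 1 + Lemma 2, coefficient form.
Let `χ = t₁⋯t_m` be a (nonempty) cycle at state `p` in a continuous VASS of
dimension `d`, and let `x ∈ ℚ^d`. Then `p(0) ⇢^{χ^k} p(x)` for some `k ∈ ℕ`
iff `x = 0` or `x` is a strictly positive rational combination of the labels
of the transitions occurring along `χ`. -/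
theorem cycle_reach_iff_pos_combination {d : ℕ} (V : CVASS d) (p : V.Q)
    (χ : List (V.Q × V.Q)) (hne : χ ≠ []) (hcyc : V.PathFrom p χ p)
    (x : Fin d → ℚ) :
    (∃ k : ℕ, V.RunFrom p 0 ((List.replicate k χ).flatten) p x) ↔
      (x = 0 ∨ ∃ a : Fin χ.length → ℚ, (∀ i, 0 < a i) ∧
        x = ∑ i, a i • V.label (χ.get i)) := by
  simp only [CVASS.runFrom_flatten_replicate_iff hcyc, sub_zero]
  exact exists_nat_smul_sum_iff_pos_combination _ x
end

section
/- Let G ⊆ ℝ² be a finite nonempty set, C = cone(G), and P = pos(G) the set of strictly positive combinations of the elements of G. If there exists v ∈ ℝ² such that C ⊆ {r • v | r ∈ ℝ} (C is trivial), then P ∪ {0} = C. Otherwise (C is nontrivial, i.e. not contained in any line through the origin), P equals the topological interior of C. (Corollary 1, dimension 2.) -/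
/-!
Let `s` be the sum of the elements of `G`. If `x - e • s` lies in `cone(G)` for some `e > 0`, then
adding `e` to each of its coefficients shows that `x` lies in `pos(G)`. Such an `e` exists
* for `x ≠ 0` in a cone contained in a line, because then `s = c • x` for some `c`, and
  `x - e • s = (1 - e * c) • x` is a nonnegative multiple of `x` for small `e`;
* for `x` in the interior of the cone, by continuity.

Conversely, when `G` spans the space, `pos(G)` is open, being the image of the open orthant under a
surjective linear map.
-/

open Filter Module PointedCone Submodule Topology

section Semiring

variable {𝕜 E : Type*} [Semiring 𝕜] [PartialOrder 𝕜] [AddCommMonoid E] [Module 𝕜 E] {G : Finset E}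

variable (𝕜 G) in
/-- The set `pos(G)` of strictly positive combinations of the elements of `G`. Every element of `G`
has to occur, so `pos(G)` need not contain `G`; it is the counterpart of `PointedCone.hull 𝕜 G`,
which is `cone(G)`. The coefficients are functions on all of `E`, whose values outside `G` are
irrelevant. -/
def posCombinations : Set E :=
  {x | ∃ a : E → 𝕜, (∀ v ∈ G, 0 < a v) ∧ x = ∑ v ∈ G, a v • v}

lemma posCombinations_eq_image_linearCombination :
    posCombinations 𝕜 G =
      Fintype.linearCombination 𝕜 ((↑) : G → E) '' Set.univ.pi fun _ => Set.Ioi 0 := by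
  ext x
  simp only [posCombinations, Set.mem_ofPred_eq, Set.mem_image, Fintype.linearCombination_apply]
  constructor
  · rintro ⟨a, ha, rfl⟩
    exact ⟨fun v => a v, fun v _ => ha v v.2, G.sum_coe_sort fun v => a v • v⟩
  · rintro ⟨b, hb, rfl⟩
    have extend_apply (v : G) : Function.extend Subtype.val b 0 v = b v :=
      Subtype.val_injective.extend_apply b 0 v
    refine ⟨Function.extend Subtype.val b 0, fun v hv => ?_, ?_⟩
    · exact (extend_apply ⟨v, hv⟩).symm ▸ hb ⟨v, hv⟩ trivial
    · simp only [← G.sum_coe_sort, extend_apply]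

variable [IsOrderedRing 𝕜]

lemma coe_hull_finset :
    (hull 𝕜 (G : Set E) : Set E) =
      {x | ∃ a : E → 𝕜, (∀ v ∈ G, 0 ≤ a v) ∧ x = ∑ v ∈ G, a v • v} := by
  ext x
  constructor
  · intro hx
    obtain ⟨a, -, rfl⟩ := mem_span_finset.1 hx
    exact ⟨fun v => a v, fun v _ => (a v).2, rfl⟩
  · rintro ⟨a, ha, rfl⟩
    exact sum_mem fun v hv => (hull 𝕜 (G : Set E)).smul_mem (ha v hv) (subset_hull hv)

lemma posCombinations_subset_hull : posCombinations 𝕜 G ⊆ hull 𝕜 (G : Set E) := by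
  rw [coe_hull_finset]
  rintro x ⟨a, ha, rfl⟩
  exact ⟨a, fun v hv => (ha v hv).le, rfl⟩

end Semiring

lemma mem_posCombinations_of_sub_smul_sum_mem_hull {𝕜 E : Type*} [Ring 𝕜] [PartialOrder 𝕜]
    [IsOrderedRing 𝕜] [AddCommGroup E] [Module 𝕜 E] {G : Finset E} {x : E} {e : 𝕜} (he : 0 < e)
    (hx : x - e • ∑ v ∈ G, v ∈ hull 𝕜 (G : Set E)) : x ∈ posCombinations 𝕜 G := by
  rw [← SetLike.mem_coe, coe_hull_finset] at hx
  obtain ⟨a, ha, hxa⟩ := hx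
  refine ⟨fun v => a v + e, fun v hv => add_pos_of_nonneg_of_pos (ha v hv) he, ?_⟩
  simp only [add_smul, Finset.sum_add_distrib]
  rw [← hxa, ← Finset.smul_sum, sub_add_cancel]

section Field

variable {𝕜 E : Type*} [Field 𝕜] [LinearOrder 𝕜] [IsStrictOrderedRing 𝕜] [AddCommGroup E]
  [Module 𝕜 E] {G : Finset E}

lemma mem_posCombinations_of_sum_eq_smul {x : E} {c : 𝕜} (hx : x ∈ hull 𝕜 (G : Set E))
    (hc : ∑ v ∈ G, v = c • x) : x ∈ posCombinations 𝕜 G := by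
  have he : 0 < (|c| + 1)⁻¹ := by positivity
  refine mem_posCombinations_of_sub_smul_sum_mem_hull he ?_
  have hec : (|c| + 1)⁻¹ * c ≤ 1 := by
    rw [inv_mul_le_one₀ (by positivity)]
    exact (le_abs_self c).trans (lt_add_one _).le
  have hsub : x - (|c| + 1)⁻¹ • ∑ v ∈ G, v = (1 - (|c| + 1)⁻¹ * c) • x := by
    rw [hc, smul_smul, sub_smul, one_smul]
  exact hsub ▸ (hull 𝕜 (G : Set E)).smul_mem (sub_nonneg.2 hec) hx

theorem posCombinations_union_zero_of_hull_subset_line {w : E}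
    (hw : (hull 𝕜 (G : Set E) : Set E) ⊆ 𝕜 ∙ w) :
    posCombinations 𝕜 G ∪ {0} = hull 𝕜 (G : Set E) := by
  refine (Set.union_subset posCombinations_subset_hull
    (Set.singleton_subset_iff.2 (zero_mem _))).antisymm fun x hx => ?_
  refine or_iff_not_imp_right.2 fun hx0 : x ≠ 0 => ?_
  have hwx : w ∈ 𝕜 ∙ x := by
    obtain ⟨r, rfl⟩ := mem_span_singleton.1 (hw hx)
    exact mem_span_singleton.2 ⟨r⁻¹, inv_smul_smul₀ (left_ne_zero_of_smul hx0) w⟩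
  have hsum : ∑ v ∈ G, v ∈ 𝕜 ∙ x :=
    (span_singleton_le_iff_mem _ _).2 hwx (hw (sum_mem fun _ hv => subset_hull hv))
  obtain ⟨c, hc⟩ := mem_span_singleton.1 hsum
  exact mem_posCombinations_of_sum_eq_smul hx hc.symm

lemma span_eq_top_of_not_hull_subset_line [FiniteDimensional 𝕜 E] (hE : finrank 𝕜 E ≤ 2)
    {s : Set E} (hs : ¬∃ w : E, (hull 𝕜 s : Set E) ⊆ 𝕜 ∙ w) : span 𝕜 s = ⊤ := by
  by_contra hne
  have hrank : finrank 𝕜 (span 𝕜 s) ≤ 1 := Nat.lt_succ_iff.1 ((finrank_lt hne).trans_le hE)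
  obtain ⟨w, hw⟩ := (finrank_le_one_iff_isPrincipal _).1 hrank
  exact hs ⟨w, hw ▸ hull_le_span 𝕜 s⟩

lemma interior_hull_subset_posCombinations [TopologicalSpace 𝕜] [OrderTopology 𝕜]
    [TopologicalSpace E] [IsTopologicalAddGroup E] [ContinuousSMul 𝕜 E] :
    interior (hull 𝕜 (G : Set E) : Set E) ⊆ posCombinations 𝕜 G := by
  intro x hx
  have hcont : Continuous fun e : 𝕜 => x - e • ∑ v ∈ G, v := by fun_prop
  have hlim : Tendsto (fun e : 𝕜 => x - e • ∑ v ∈ G, v) (𝓝[>] 0) (𝓝 x) := by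
    simpa using (hcont.tendsto 0).mono_left nhdsWithin_le_nhds
  obtain ⟨e, hmem, he⟩ :=
    ((hlim.eventually (mem_interior_iff_mem_nhds.1 hx)).and self_mem_nhdsWithin).exists
  exact mem_posCombinations_of_sub_smul_sum_mem_hull he hmem

end Field

section Topology

variable {E : Type*} [AddCommGroup E] [Module ℝ E] [TopologicalSpace E] [IsTopologicalAddGroup E]
  [ContinuousSMul ℝ E] [T2Space E] {G : Finset E}

lemma isOpen_posCombinations (hG : span ℝ (G : Set E) = ⊤) : IsOpen (posCombinations ℝ G) := by
  have : FiniteDimensional ℝ E := ⟨⟨G, hG⟩⟩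
  have hsurj : Function.Surjective (Fintype.linearCombination ℝ ((↑) : G → E)) := by
    rw [← LinearMap.range_eq_top, Fintype.range_linearCombination, ← hG]
    simp
  rw [posCombinations_eq_image_linearCombination]
  exact LinearMap.isOpenMap_of_finiteDimensional _ hsurj _
    (isOpen_set_pi Set.finite_univ fun _ _ => isOpen_Ioi)

theorem posCombinations_eq_interior_hull (hG : span ℝ (G : Set E) = ⊤) :
    posCombinations ℝ G = interior (hull ℝ (G : Set E) : Set E) :=
  (interior_maximal posCombinations_subset_hull (isOpen_posCombinations hG)).antisymm
    interior_hull_subset_posCombinations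

variable (G) in
theorem dim2_cone_cases_general :
    ((∃ w : E, (hull ℝ (G : Set E) : Set E) ⊆ ℝ ∙ w) →
      posCombinations ℝ G ∪ {0} = hull ℝ (G : Set E)) ∧
    (span ℝ (G : Set E) = ⊤ →
      posCombinations ℝ G = interior (hull ℝ (G : Set E) : Set E)) :=
  ⟨fun ⟨_, hw⟩ => posCombinations_union_zero_of_hull_subset_line hw,
    posCombinations_eq_interior_hull⟩

end Topology

/-- Corollary 1, dimension 2. Let `G ⊆ ℝ²` be a finite
nonempty set, `C = cone(G)` its cone of nonnegative combinations and
`P = pos(G)` its set of strictly positive combinations. If `C` is contained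
in a line `{r • v | r ∈ ℝ}` (trivial case), then `P ∪ {0} = C`; otherwise
`P` equals the topological interior of `C`. -/
theorem dim2_cone_cases (G : Finset (Fin 2 → ℝ)) (hG : G.Nonempty)
    (C P : Set (Fin 2 → ℝ))
    (hC : C = {x | ∃ a : (Fin 2 → ℝ) → ℝ, (∀ v ∈ G, 0 ≤ a v) ∧
      x = ∑ v ∈ G, a v • v})
    (hP : P = {x | ∃ a : (Fin 2 → ℝ) → ℝ, (∀ v ∈ G, 0 < a v) ∧
      x = ∑ v ∈ G, a v • v}) :
    ((∃ v : Fin 2 → ℝ, C ⊆ {x | ∃ r : ℝ, x = r • v}) → P ∪ {0} = C) ∧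
    (¬ (∃ v : Fin 2 → ℝ, C ⊆ {x | ∃ r : ℝ, x = r • v}) → P = interior C) := by
  have hline (w : Fin 2 → ℝ) : {x | ∃ r : ℝ, x = r • w} = (ℝ ∙ w : Set (Fin 2 → ℝ)) := by
    ext x
    simp [mem_span_singleton, eq_comm]
  rw [← coe_hull_finset] at hC
  subst hC hP
  simp only [hline]
  exact (dim2_cone_cases_general G).imp_right fun h hnontrivial =>
    h (span_eq_top_of_not_hull_subset_line (finrank_fin_fun ℝ).le hnontrivial)
end

section
/- Let d ≥ 1 and let g : Fin n → ℝ^d be a finite family of vectors such that g i ≠ 0 for all i and, for all i ≠ j, g i is not a nonnegative scalar multiple of g j. Then {∑_i a_i • g i | a : Fin n → ℝ, ∀ i, 0 < a_i ≤ 1} = relint(zono(g)) ∪ adj(g). (Theorem 2: for a path π, Reach(π) = relint(zono(G_M)) ∪ adj(G_M), stated geometrically for a generator satisfying the defining conditions of G_M.) -/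
open Pointwise

/-- The zonotope generated by a finite family `g : Fin n → ℝ^d`:
all combinations `∑ i, a i • g i` with coefficients `a i ∈ [0,1]`. -/
def zonoSet {d n : ℕ} (g : Fin n → (Fin d → ℝ)) : Set (Fin d → ℝ) :=
  {x | ∃ a : Fin n → ℝ, (∀ i, 0 ≤ a i ∧ a i ≤ 1) ∧ x = ∑ i, a i • g i}

/-- A face of the zonotope of `g`: a nonempty subset of the zonotope on which
some linear functional attains its maximum over the zonotope. -/
def IsZonoFace {d n : ℕ} (g : Fin n → (Fin d → ℝ)) (F : Set (Fin d → ℝ)) : Prop :=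
  F.Nonempty ∧ ∃ l : (Fin d → ℝ) →ₗ[ℝ] ℝ,
    F = {x | x ∈ zonoSet g ∧ ∀ y ∈ zonoSet g, l y ≤ l x}

/-- `adjSet g` : the union of `{σ_g}` (where `σ_g = ∑ i, g i`) with the
relative interiors of all faces of the zonotope of `g` containing `σ_g`. -/
def adjSet {d n : ℕ} (g : Fin n → (Fin d → ℝ)) : Set (Fin d → ℝ) :=
  {∑ i, g i} ∪
    ⋃ F ∈ {F | IsZonoFace g F ∧ (∑ i, g i) ∈ F}, intrinsicInterior ℝ F

/-!
The half-open cube `(0, 1]^n` is the union of the open segments joining `1` to the points of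
`[0, 1]^n`, so its image is the union of the open segments joining `σ = ∑ i, v i` to the points of
the zonotope. A polytope is the union of the relative interiors of its exposed faces: a minimal
exposed face containing `x` has `x` in its relative interior, since otherwise a supporting
functional at `x` would cut off a smaller face. If `x` lies on an open segment starting at `σ`, then
extremality puts `σ` in that face; conversely, from a point in the relative interior of a face
containing `σ` one can move slightly further away from `σ` inside the face.
-/

section Polytope

theorem isExposed_iff_of_mem {𝕜 E : Type*} [TopologicalSpace 𝕜] [Semiring 𝕜] [PartialOrder 𝕜]
    [AddCommMonoid E] [TopologicalSpace E] [Module 𝕜 E] {A F : Set E} {z : E} (hz : z ∈ F) :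
    IsExposed 𝕜 A F ↔ ∃ l : StrongDual 𝕜 E,
      (∀ y ∈ A, l y ≤ l z) ∧ ∀ y, y ∈ F ↔ y ∈ A ∧ l y = l z := by
  constructor
  · intro hF
    obtain ⟨l, rfl⟩ := hF ⟨z, hz⟩
    exact ⟨l, hz.2, fun y ↦ ⟨fun hy ↦ ⟨hy.1, (hz.2 y hy.1).antisymm (hy.2 z hz.1)⟩,
      fun hy ↦ ⟨hy.1, fun w hw ↦ (hz.2 w hw).trans_eq hy.2.symm⟩⟩⟩
  · rintro ⟨l, hle, hF⟩ -
    refine ⟨l, Set.ext fun y ↦ (hF y).trans (and_congr_right fun hy ↦ ?_)⟩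
    exact ⟨fun h w hw ↦ (hle w hw).trans_eq h.symm,
      fun h ↦ (hle y hy).antisymm (h z ((hF z).1 hz).1)⟩

variable {𝕜 E : Type*} [Field 𝕜] [LinearOrder 𝕜] [IsStrictOrderedRing 𝕜] [AddCommGroup E]
  [Module 𝕜 E] {s F G : Set E}

theorem convexHull_inter_eq_of_isExtreme (hF : IsExtreme 𝕜 (convexHull 𝕜 s) F)
    (hconv : Convex 𝕜 F) : convexHull 𝕜 (s ∩ F) = F := by
  refine (convexHull_min Set.inter_subset_right hconv).antisymm fun x hx ↦ ?_
  have hhull : convexHull 𝕜 (s ∩ F) ⊆ convexHull 𝕜 s := convexHull_mono Set.inter_subset_left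
  -- Extremality makes every segment from `F` to a point outside `F` leave `F` immediately.
  have mixed {u v : E} (hu : u ∈ convexHull 𝕜 (s ∩ F)) (hv : v ∈ convexHull 𝕜 s \ F) :
      openSegment 𝕜 u v ⊆ convexHull 𝕜 s \ F := fun w hw ↦
    ⟨(convex_convexHull 𝕜 s).openSegment_subset (hhull hu) hv.1 hw,
      fun hwF ↦ hv.2 (hF.right_mem_of_mem_openSegment (hhull hu) hv.1 hwF hw)⟩
  have hunion : Convex 𝕜 (convexHull 𝕜 (s ∩ F) ∪ convexHull 𝕜 s \ F) := by
    rw [convex_iff_openSegment_subset]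
    rintro u (hu | hu) v (hv | hv)
    · exact ((convex_convexHull 𝕜 _).openSegment_subset hu hv).trans Set.subset_union_left
    · exact (mixed hu hv).trans Set.subset_union_right
    · rw [openSegment_symm]
      exact (mixed hv hu).trans Set.subset_union_right
    · exact ((hF.convex_sdiff (convex_convexHull 𝕜 s)).openSegment_subset hu hv).trans
        Set.subset_union_right
  have hcover : s ⊆ convexHull 𝕜 (s ∩ F) ∪ convexHull 𝕜 s \ F := fun v hv ↦ by
    by_cases hvF : v ∈ F
    · exact Or.inl (subset_convexHull 𝕜 _ ⟨hv, hvF⟩)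
    · exact Or.inr ⟨subset_convexHull 𝕜 s hv, hvF⟩
  exact (convexHull_min hcover hunion (hF.subset hx)).resolve_right fun h ↦ h.2 hx

theorem exists_forall_mem_lt_mul {α : Type*} {t : Set α} (ht : t.Finite) (f g : α → 𝕜) :
    ∃ N : 𝕜, ∀ a ∈ t, 0 < f a → g a < N * f a := by
  obtain ⟨N, hN⟩ := (ht.image fun a ↦ g a / f a).bddAbove
  refine ⟨N + 1, fun a ha hfa ↦ (div_lt_iff₀ hfa).1 ?_⟩
  exact (hN (Set.mem_image_of_mem _ ha)).trans_lt (lt_add_one N)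

variable [TopologicalSpace 𝕜] [TopologicalSpace E]

theorem convexHull_inter_eq_of_isExposed (hF : IsExposed 𝕜 (convexHull 𝕜 s) F) :
    convexHull 𝕜 (s ∩ F) = F :=
  convexHull_inter_eq_of_isExtreme hF.isExtreme (hF.convex (convex_convexHull 𝕜 s))

theorem finite_setOf_isExposed_convexHull (hs : s.Finite) :
    {F | IsExposed 𝕜 (convexHull 𝕜 s) F}.Finite :=
  (hs.finite_subsets.image (convexHull 𝕜)).subset fun F hF ↦
    ⟨s ∩ F, Set.inter_subset_left, convexHull_inter_eq_of_isExposed hF⟩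

theorem isExposed_convexHull_of_forall_lt {z : E} (hG : Convex 𝕜 G) (hGs : G ⊆ convexHull 𝕜 s)
    (hz : z ∈ G) (k : StrongDual 𝕜 E) (hkG : ∀ w ∈ G, k w = k z)
    (hk_lt : ∀ v ∈ s, v ∉ G → k v < k z) : IsExposed 𝕜 (convexHull 𝕜 s) G := by
  have hk_le : ∀ w ∈ convexHull 𝕜 s, k w ≤ k z :=
    convexHull_min (fun v hv ↦ (em (v ∈ G)).elim (fun h ↦ (hkG v h).le) fun h ↦ (hk_lt v hv h).le)
      (convex_halfSpace_le k.toLinearMap.isLinear (k z))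
  have hzH : z ∈ {w | w ∈ convexHull 𝕜 s ∧ k w = k z} := ⟨hGs hz, rfl⟩
  have hH : IsExposed 𝕜 (convexHull 𝕜 s) {w | w ∈ convexHull 𝕜 s ∧ k w = k z} :=
    (isExposed_iff_of_mem hzH).2 ⟨k, hk_le, fun _ ↦ Iff.rfl⟩
  convert hH using 1
  refine Set.Subset.antisymm (fun w hw ↦ ⟨hGs hw, hkG w hw⟩) ?_
  rw [← convexHull_inter_eq_of_isExposed hH]
  exact convexHull_min (fun v hv ↦ by_contra fun hvG ↦ (hk_lt v hv.1 hvG).ne hv.2.2) hG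

theorem isExposed_convexHull_trans [IsTopologicalRing 𝕜] (hs : s.Finite)
    (hF : IsExposed 𝕜 (convexHull 𝕜 s) F) (hG : IsExposed 𝕜 F G) :
    IsExposed 𝕜 (convexHull 𝕜 s) G := by
  obtain rfl | ⟨z, hzG⟩ := G.eq_empty_or_nonempty
  · exact isExposed_empty
  obtain ⟨l, hl_le, hlF⟩ := (isExposed_iff_of_mem (hG.subset hzG)).1 hF
  obtain ⟨m, hm_le, hmG⟩ := (isExposed_iff_of_mem hzG).1 hG
  obtain ⟨N, hN⟩ := exists_forall_mem_lt_mul hs (fun v ↦ l z - l v) (fun v ↦ m v - m z)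
  -- For large `N` this functional compares vertices with `z` lexicographically, by `l` then `m`.
  let k : StrongDual 𝕜 E := N • l + m
  have hk (w : E) : k w = N * l w + m w := rfl
  have hkG : ∀ w ∈ G, k w = k z := fun w hw ↦ by
    rw [hk, hk, ((hmG w).1 hw).2, ((hlF w).1 (hG.subset hw)).2]
  refine isExposed_convexHull_of_forall_lt (hG.convex (hF.convex (convex_convexHull 𝕜 s)))
    (hG.subset.trans hF.subset) hzG k hkG fun v hv hvG ↦ ?_
  have hv_hull := subset_convexHull 𝕜 s hv
  by_cases hvF : v ∈ F
  · have hmv : m v < m z := (hm_le v hvF).lt_of_ne fun h ↦ hvG ((hmG v).2 ⟨hvF, h⟩)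
    rw [hk, hk, ((hlF v).1 hvF).2]
    exact add_lt_add_right hmv _
  · have hlv : l v < l z := (hl_le v hv_hull).lt_of_ne fun h ↦ hvF ((hlF v).2 ⟨hv_hull, h⟩)
    have hN_lt := hN v hv (sub_pos.2 hlv)
    rw [hk, hk]
    linarith

end Polytope

section RelativeInterior

theorem exists_mem_openSegment_of_mem_intrinsicInterior {V : Type*} [AddCommGroup V] [Module ℝ V]
    [TopologicalSpace V] [IsTopologicalAddGroup V] [ContinuousSMul ℝ V] {s : Set V} {x y : V}
    (hx : x ∈ intrinsicInterior ℝ s) (hy : y ∈ s) : ∃ z ∈ s, x ∈ openSegment ℝ y z := by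
  obtain ⟨p, hp, rfl⟩ := mem_intrinsicInterior.1 hx
  let line (t : ℝ) : affineSpan ℝ s :=
    ⟨AffineMap.lineMap y (p : V) t, AffineMap.lineMap_mem t (subset_affineSpan ℝ s hy) p.2⟩
  have hcont : Continuous line := AffineMap.lineMap_continuous.subtype_mk _
  have hline : line 1 = p := Subtype.ext (AffineMap.lineMap_apply_one y (p : V))
  have hnear : ∀ᶠ t in nhds 1, (line t : V) ∈ s :=
    hcont.continuousAt (mem_interior_iff_mem_nhds.1 (hline ▸ hp))
  obtain ⟨t, hts, ht⟩ := ((hnear.filter_mono nhdsWithin_le_nhds).and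
    (self_mem_nhdsWithin (s := Set.Ioi 1))).exists
  have ht0 : 0 < t := one_pos.trans ht
  refine ⟨line t, hts, ?_⟩
  rw [openSegment_eq_image_lineMap]
  refine ⟨t⁻¹, ⟨inv_pos.2 ht0, inv_lt_one_of_one_lt₀ ht⟩, ?_⟩
  rw [AffineMap.lineMap_lineMap_right, inv_mul_cancel₀ ht0.ne', AffineMap.lineMap_apply_one]

variable {V : Type*} [NormedAddCommGroup V] [NormedSpace ℝ V] {s : Set V} {x : V}

theorem exists_le_and_lt_of_notMem_interior (hs : Convex ℝ s) (hne : (interior s).Nonempty)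
    (hx : x ∉ interior s) :
    ∃ f : StrongDual ℝ V, (∀ y ∈ s, f y ≤ f x) ∧ ∃ y ∈ s, f y < f x := by
  obtain ⟨f, hf0, hf⟩ := geometric_hahn_banach_of_nonempty_interior_point hs hx hne
  obtain ⟨y, hy⟩ := hne
  refine ⟨f, hf, y, interior_subset hy, (hf y (interior_subset hy)).lt_of_ne fun hfy ↦ hf0 ?_⟩
  have hmax : IsLocalMax f y := by
    filter_upwards [mem_interior_iff_mem_nhds.1 hy] with z hz using (hf z hz).trans_eq hfy.symm
  exact hmax.hasFDerivAt_eq_zero f.hasFDerivAt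

theorem exists_le_and_lt_of_notMem_intrinsicInterior [FiniteDimensional ℝ (vectorSpan ℝ s)]
    (hs : Convex ℝ s) (hxs : x ∈ s) (hx : x ∉ intrinsicInterior ℝ s) :
    ∃ f : StrongDual ℝ V, (∀ y ∈ s, f y ≤ f x) ∧ ∃ y ∈ s, f y < f x := by
  let φ : vectorSpan ℝ s →ᵃⁱ[ℝ] V :=
    (AffineIsometryEquiv.vaddConst ℝ x).toAffineIsometry.comp
      (vectorSpan ℝ s).subtypeₗᵢ.toAffineIsometry
  have hφ (w : vectorSpan ℝ s) : φ w = w + x := rfl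
  have himage : φ '' (φ ⁻¹' s) = s := Set.image_preimage_eq_of_subset fun y hy ↦
    ⟨⟨y - x, vsub_mem_vectorSpan ℝ hy hxs⟩, sub_add_cancel y x⟩
  have hconv : Convex ℝ (φ ⁻¹' s) := hs.affine_preimage φ.toAffineMap
  have h0 : (0 : vectorSpan ℝ s) ∈ φ ⁻¹' s := by simpa [hφ] using hxs
  have hspan : vectorSpan ℝ (φ ⁻¹' s) = ⊤ := by
    apply Submodule.map_injective_of_injective (vectorSpan ℝ s).subtype_injective
    rw [Submodule.map_top, Submodule.range_subtype]
    exact (AffineMap.map_vectorSpan φ.toAffineMap).trans (congrArg _ himage)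
  have hne : (interior (φ ⁻¹' s)).Nonempty := by
    rw [hconv.interior_nonempty_iff_affineSpan_eq_top,
      AffineSubspace.affineSpan_eq_top_iff_vectorSpan_eq_top_of_nonempty ℝ _ _ ⟨0, h0⟩, hspan]
  have hint : 0 ∉ interior (φ ⁻¹' s) := fun h ↦ hx <| by
    rw [← himage, φ.intrinsicInterior_image]
    exact ⟨0, interior_subset_intrinsicInterior h, by simp [hφ]⟩
  obtain ⟨f, hf, w, hw, hfw⟩ := exists_le_and_lt_of_notMem_interior hconv hne hint
  obtain ⟨F, hF, -⟩ := exists_extension_norm_eq (vectorSpan ℝ s) f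
  have hFφ (w : vectorSpan ℝ s) : F (φ w) = f w + F x := by rw [hφ, map_add, hF]
  refine ⟨F, ?_, φ w, hw, ?_⟩
  · rw [← himage]
    rintro _ ⟨v, hv, rfl⟩
    simpa [hFφ] using hf v hv
  · simpa [hFφ] using hfw

theorem exists_isExposed_convexHull_mem_intrinsicInterior (hs : s.Finite)
    (hx : x ∈ convexHull ℝ s) :
    ∃ F, IsExposed ℝ (convexHull ℝ s) F ∧ x ∈ intrinsicInterior ℝ F := by
  obtain ⟨F, hFmin⟩ := ((finite_setOf_isExposed_convexHull (𝕜 := ℝ) hs).subset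
    (Set.sep_subset _ (x ∈ ·))).exists_minimal ⟨_, IsExposed.refl _, hx⟩
  obtain ⟨hF, hxF⟩ := hFmin.prop
  refine ⟨F, hF, by_contra fun hx_int ↦ ?_⟩
  have hspan : vectorSpan ℝ F ≤ vectorSpan ℝ s := by
    rw [← direction_affineSpan ℝ s, ← affineSpan_convexHull, direction_affineSpan]
    exact vectorSpan_mono ℝ hF.subset
  have := finiteDimensional_vectorSpan_of_finite ℝ hs
  have := Submodule.finiteDimensional_of_le hspan
  obtain ⟨f, hf, y, hyF, hfy⟩ := exists_le_and_lt_of_notMem_intrinsicInterior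
    (hF.convex (convex_convexHull ℝ s)) hxF hx_int
  have hG : IsExposed ℝ (convexHull ℝ s) (f.toExposed F) :=
    isExposed_convexHull_trans hs hF ContinuousLinearMap.toExposed.isExposed
  have hyG : y ∈ f.toExposed F := hFmin.le_of_le ⟨hG, hxF, hf⟩ (Set.sep_subset _ _) hyF
  exact (hyG.2 x hxF).not_gt hfy

theorem iUnion_intrinsicInterior_isExposed_convexHull (hs : s.Finite) {p : V}
    (hp : p ∈ convexHull ℝ s) :
    ⋃ F ∈ {F | IsExposed ℝ (convexHull ℝ s) F ∧ p ∈ F}, intrinsicInterior ℝ F =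
      ⋃ z ∈ convexHull ℝ s, openSegment ℝ p z := by
  refine Set.Subset.antisymm (Set.iUnion₂_subset ?_) (Set.iUnion₂_subset fun z hz x hx ↦ ?_)
  · rintro F ⟨hF, hpF⟩ x hx
    obtain ⟨z, hz, hxz⟩ := exists_mem_openSegment_of_mem_intrinsicInterior hx hpF
    exact Set.mem_biUnion (hF.subset hz) hxz
  · have hx_hull := (convex_convexHull ℝ s).openSegment_subset hp hz hx
    obtain ⟨F, hF, hxF⟩ := exists_isExposed_convexHull_mem_intrinsicInterior hs hx_hull
    have hpF : p ∈ F :=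
      hF.isExtreme.left_mem_of_mem_openSegment hp hz (intrinsicInterior_subset hxF) hx
    exact Set.mem_biUnion ⟨hF, hpF⟩ hxF

end RelativeInterior

section Zonotope

variable {ι V : Type*}

theorem setOf_forall_pos_and_le_one_eq_iUnion_openSegment [Finite ι] :
    {a : ι → ℝ | ∀ i, 0 < a i ∧ a i ≤ 1} =
      ⋃ b ∈ Set.Icc (0 : ι → ℝ) 1, openSegment ℝ 1 b := by
  refine Set.Subset.antisymm (fun a ha ↦ ?_) (Set.iUnion₂_subset ?_)
  · have hsmall : ∀ᶠ r : ℝ in nhdsWithin 0 (Set.Ioi 0), r < 1 ∧ ∀ i, r < a i :=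
      nhdsWithin_le_nhds <| (eventually_lt_nhds one_pos).and <|
        Filter.eventually_all.2 fun i ↦ eventually_lt_nhds (ha i).1
    obtain ⟨r, ⟨hr1, hra⟩, hr0⟩ := (hsmall.and self_mem_nhdsWithin).exists
    have hr : 0 < 1 - r := sub_pos.2 hr1
    refine Set.mem_biUnion (x := fun i ↦ (a i - r) / (1 - r)) ⟨fun i ↦ ?_, fun i ↦ ?_⟩
      ⟨r, 1 - r, hr0, hr, add_sub_cancel r 1, funext fun i ↦ ?_⟩
    · exact div_nonneg (sub_pos.2 (hra i)).le hr.le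
    · exact (div_le_one₀ hr).2 (sub_le_sub_right (ha i).2 r)
    · simp [mul_div_cancel₀ _ hr.ne']
  · rintro b ⟨hb0, hb1⟩ _ ⟨r, t, hr, ht, hrt, rfl⟩ i
    have htb0 : 0 ≤ t * b i := mul_nonneg ht.le (hb0 i)
    have htb1 : t * b i ≤ t := mul_le_of_le_one_right ht.le (hb1 i)
    simp only [Pi.add_apply, Pi.smul_apply, Pi.one_apply, smul_eq_mul, mul_one]
    exact ⟨by linarith, by linarith⟩

theorem setOf_sum_smul_eq_iUnion_openSegment [Fintype ι] [AddCommGroup V] [Module ℝ V]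
    (v : ι → V) :
    {x | ∃ a : ι → ℝ, (∀ i, 0 < a i ∧ a i ≤ 1) ∧ x = ∑ i, a i • v i} =
      ⋃ z ∈ parallelepiped v, openSegment ℝ (∑ i, v i) z := by
  have himage : {x | ∃ a : ι → ℝ, (∀ i, 0 < a i ∧ a i ≤ 1) ∧ x = ∑ i, a i • v i} =
      Fintype.linearCombination ℝ v '' {a | ∀ i, 0 < a i ∧ a i ≤ 1} :=
    Set.ext fun x ↦ exists_congr fun a ↦ and_congr_right fun _ ↦ eq_comm
  have hone : Fintype.linearCombination ℝ v 1 = ∑ i, v i := by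
    simp [Fintype.linearCombination_apply]
  have hopenSegment (b : ι → ℝ) : Fintype.linearCombination ℝ v '' openSegment ℝ 1 b =
      openSegment ℝ (∑ i, v i) (Fintype.linearCombination ℝ v b) :=
    (image_openSegment ℝ (Fintype.linearCombination ℝ v).toAffineMap 1 b).trans (by simp [hone])
  rw [himage, setOf_forall_pos_and_le_one_eq_iUnion_openSegment, Set.image_iUnion₂, parallelepiped,
    Set.biUnion_image]
  exact Set.iUnion₂_congr fun b _ ↦ hopenSegment b

theorem sum_mem_parallelepiped [Fintype ι] [AddCommGroup V] [Module ℝ V] (v : ι → V) :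
    ∑ i, v i ∈ parallelepiped v :=
  (mem_parallelepiped_iff v _).2 ⟨1, ⟨zero_le_one, le_rfl⟩, by simp⟩

theorem path_reach_eq_relint_zono_union_adj_general [Fintype ι] [NormedAddCommGroup V]
    [NormedSpace ℝ V] (v : ι → V) :
    {x | ∃ a : ι → ℝ, (∀ i, 0 < a i ∧ a i ≤ 1) ∧ x = ∑ i, a i • v i} =
      intrinsicInterior ℝ (parallelepiped v) ∪ ({∑ i, v i} ∪
        ⋃ F ∈ {F | IsExposed ℝ (parallelepiped v) F ∧ ∑ i, v i ∈ F}, intrinsicInterior ℝ F) := by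
  have hσ := sum_mem_parallelepiped v
  have hvertices : (∑ i, {0, v i} : Set V).Finite :=
    Finset.sum_induction _ Set.Finite (fun _ _ ↦ Set.Finite.add) Set.finite_zero
      fun _ _ ↦ Set.toFinite _
  have hfaces : ⋃ F ∈ {F | IsExposed ℝ (parallelepiped v) F ∧ ∑ i, v i ∈ F},
      intrinsicInterior ℝ F = ⋃ z ∈ parallelepiped v, openSegment ℝ (∑ i, v i) z := by
    rw [parallelepiped_eq_convexHull] at hσ ⊢
    exact iUnion_intrinsicInterior_isExposed_convexHull hvertices hσ
  have hrelint : intrinsicInterior ℝ (parallelepiped v) ⊆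
      ⋃ F ∈ {F | IsExposed ℝ (parallelepiped v) F ∧ ∑ i, v i ∈ F}, intrinsicInterior ℝ F :=
    Set.subset_biUnion_of_mem ⟨IsExposed.refl _, hσ⟩
  have hσ_face : {∑ i, v i} ⊆
      ⋃ F ∈ {F | IsExposed ℝ (parallelepiped v) F ∧ ∑ i, v i ∈ F}, intrinsicInterior ℝ F := by
    rw [hfaces, Set.singleton_subset_iff]
    exact Set.mem_biUnion hσ (by simp [openSegment_same])
  rw [Set.union_eq_right.2 hσ_face, Set.union_eq_right.2 hrelint, hfaces,
    setOf_sum_smul_eq_iUnion_openSegment]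

end Zonotope

section ZonoSet

variable {d n : ℕ} (g : Fin n → Fin d → ℝ)

theorem zonoSet_eq_parallelepiped : zonoSet g = parallelepiped g := by
  ext x
  simp only [mem_parallelepiped_iff, Set.mem_Icc, Pi.le_def, ← forall_and]
  rfl

theorem isZonoFace_iff {F : Set (Fin d → ℝ)} :
    IsZonoFace g F ↔ F.Nonempty ∧ IsExposed ℝ (parallelepiped g) F := by
  rw [IsZonoFace, IsExposed, zonoSet_eq_parallelepiped,
    LinearMap.toContinuousLinearMap.surjective.exists]
  exact and_congr_right fun hF ↦ ⟨fun h _ ↦ h, fun h ↦ h hF⟩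

theorem adjSet_eq : adjSet g = {∑ i, g i} ∪
    ⋃ F ∈ {F | IsExposed ℝ (parallelepiped g) F ∧ ∑ i, g i ∈ F}, intrinsicInterior ℝ F := by
  have hfaces : {F | IsZonoFace g F ∧ ∑ i, g i ∈ F} =
      {F | IsExposed ℝ (parallelepiped g) F ∧ ∑ i, g i ∈ F} :=
    Set.ext fun F ↦ and_congr_left fun hσ ↦
      (isZonoFace_iff g).trans (and_iff_right ⟨_, hσ⟩)
  rw [adjSet, hfaces]

end ZonoSet

/-- Theorem 2, geometric form. Let `d ≥ 1` and let
`g : Fin n → ℝ^d` be a family of nonzero vectors no two of which are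
nonnegative multiples of one another (the defining conditions of `G_M`).
Then the set of combinations `∑ i, a i • g i` with all `a i ∈ (0,1]` equals
`relint(zono(g)) ∪ adj(g)`. -/
theorem path_reach_eq_relint_zono_union_adj (d n : ℕ) (hd : 1 ≤ d)
    (g : Fin n → (Fin d → ℝ)) (hg0 : ∀ i, g i ≠ 0)
    (hgm : ∀ i j, i ≠ j → ∀ c : ℝ, 0 ≤ c → g i ≠ c • g j) :
    {x : Fin d → ℝ | ∃ a : Fin n → ℝ, (∀ i, 0 < a i ∧ a i ≤ 1) ∧
        x = ∑ i, a i • g i} =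
      intrinsicInterior ℝ (zonoSet g) ∪ adjSet g := by
  rw [zonoSet_eq_parallelepiped, adjSet_eq]
  exact path_reach_eq_relint_zono_union_adj_general g
end

section
/- Let V = (Q, T, ℓ) be a continuous VASS of dimension d, let x, y ∈ ℚ_{≥0}^d, and let π be a path with p(x) →^π q(y) in the nonnegative semantics. Then there exists a linear path scheme σ = π₀χ₁*π₁⋯χₙ*πₙ over V such that: n ≤ |Q|; every π_i is a simple path; |χ_i| ≤ 4·|Q|·(|T| + d + 2)·(d·|T|^{d+1} + 1) for all 1 ≤ i ≤ n; and y ∈ Reach^x_{≥0}(σ). (Theorem: short linear path schemes suffice for ℚ≥0VASS reachability.) -/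
open Pointwise

/-!
Two facts carry the proof. First, a run around a cycle can be replaced by a run around the powers
of a short cycle. Which coordinates are positive along the run decides whether a cycle can be fired
at all, forwards from its start and backwards from its end; a subpath witnessing this only has to
keep the at most `d` edges that make a further coordinate positive, and shortest connections
between them. Concatenating a forward witness, a closed walk through all edges of the cycle and a
backward witness gives a short cycle `χ` with the same edges. Firing `χ` once forwards and once
backwards, with tiny coefficients, leads to two configurations that are positive in every coordinate
that `χ` touches. Almost all of the original weights remain, and they can be distributed evenly over
sufficiently many copies of `χ`, each of which moves by so little that no coordinate gets negative.

Second, cutting a run at the last visit of its first state `p` leaves a cycle on `p` and a run that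
never returns to `p`. Iterating, every state contributes at most one cycle.
-/

namespace ContinuousVASS

section Walk

variable {E Q : Type*} {src tgt : E → Q} {p q : Q} {π C : List E}

/-- `IsWalk src tgt p π q`: the edges `π` form a walk from `p` to `q` in the directed multigraph
whose edges `e` lead from `src e` to `tgt e`. Keeping the end points of an edge as maps makes the
reversed graph the one with `src` and `tgt` exchanged. -/
def IsWalk (src tgt : E → Q) : Q → List E → Q → Prop
  | p, [], q => p = q
  | p, e :: π, q => src e = p ∧ IsWalk src tgt (tgt e) π q

theorem isWalk_append {a b : List E} :
    IsWalk src tgt p (a ++ b) q ↔ ∃ r, IsWalk src tgt p a r ∧ IsWalk src tgt r b q := by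
  induction a generalizing p with
  | nil => simp [IsWalk]
  | cons e a ih => simp [IsWalk, ih, and_assoc]

theorem IsWalk.reverse (h : IsWalk src tgt p π q) : IsWalk tgt src q π.reverse p := by
  induction π generalizing p with
  | nil => exact Eq.symm h
  | cons e π ih =>
    rw [List.reverse_cons, isWalk_append]
    exact ⟨tgt e, ih h.2, rfl, h.1⟩

theorem IsWalk.flatten_replicate (h : IsWalk src tgt p π p) (k : ℕ) :
    IsWalk src tgt p (List.replicate k π).flatten p := by
  induction k with
  | zero => rfl
  | succ k ih =>
    rw [List.replicate_succ, List.flatten_cons, isWalk_append]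
    exact ⟨p, h, ih⟩

theorem IsWalk.exists_suffix_of_mem {r : Q} (h : IsWalk src tgt p π q)
    (hr : r ∈ p :: π.map tgt) :
    ∃ π' ⊆ π, IsWalk src tgt r π' q ∧ r :: π'.map tgt <:+ p :: π.map tgt := by
  by_cases hrp : r = p
  · subst hrp
    exact ⟨π, List.Subset.refl _, h, List.suffix_rfl⟩
  induction π generalizing p with
  | nil => simp_all
  | cons e π ih =>
    have hr' : r ∈ tgt e :: π.map tgt := by simpa [hrp] using hr
    by_cases hre : r = tgt e
    · subst hre
      exact ⟨π, List.subset_cons_self _ _, h.2, List.suffix_cons _ _⟩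
    · obtain ⟨π', hsub, hwalk, hsuf⟩ := ih h.2 hr' hre
      exact ⟨π', List.subset_cons_of_subset _ hsub, hwalk, hsuf.trans (List.suffix_cons _ _)⟩

theorem IsWalk.exists_nodup (h : IsWalk src tgt p π q) :
    ∃ π' ⊆ π, IsWalk src tgt p π' q ∧ (p :: π'.map tgt).Nodup := by
  induction π generalizing p with
  | nil => exact ⟨[], List.Subset.refl _, h, by simp⟩
  | cons e π ih =>
    obtain ⟨π₁, hsub₁, hwalk₁, hnodup₁⟩ := ih h.2
    by_cases hp : p ∈ tgt e :: π₁.map tgt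
    · obtain ⟨π₂, hsub₂, hwalk₂, hsuf⟩ := hwalk₁.exists_suffix_of_mem hp
      exact ⟨π₂, List.subset_cons_of_subset _ (List.Subset.trans hsub₂ hsub₁), hwalk₂,
        hnodup₁.sublist hsuf.sublist⟩
    · exact ⟨e :: π₁, List.cons_subset_cons _ hsub₁, ⟨h.1, hwalk₁⟩,
        List.nodup_cons.2 ⟨hp, hnodup₁⟩⟩

variable [Fintype Q]

theorem IsWalk.exists_length_lt_card (h : IsWalk src tgt p π q) :
    ∃ π' ⊆ π, IsWalk src tgt p π' q ∧ π'.length < Fintype.card Q := by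
  obtain ⟨π', hsub, hwalk, hnodup⟩ := h.exists_nodup
  exact ⟨π', hsub, hwalk, by simpa using hnodup.length_le_card⟩

theorem IsWalk.exists_short_of_mem {e : E} (h : IsWalk src tgt p π q) (he : e ∈ π) :
    ∃ π' ⊆ π, e ∈ π' ∧ IsWalk src tgt p π' q ∧ π'.length < 2 * Fintype.card Q := by
  obtain ⟨a, b, rfl⟩ := List.append_of_mem he
  obtain ⟨r, ha, hsrc, hb⟩ := isWalk_append.1 h
  obtain ⟨a', hsub_a, ha', hlen_a⟩ := ha.exists_length_lt_card
  obtain ⟨b', hsub_b, hb', hlen_b⟩ := hb.exists_length_lt_card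
  refine ⟨a' ++ e :: b', ?_, by simp, isWalk_append.2 ⟨r, ha', hsrc, hb'⟩, ?_⟩
  · exact List.append_subset.2 ⟨List.subset_append_of_subset_left _ hsub_a,
      List.subset_append_of_subset_right _ (List.cons_subset_cons e hsub_b)⟩
  · simp only [List.length_append, List.length_cons]
    omega

theorem IsWalk.exists_short_cycle_of_subset (hC : IsWalk src tgt p C p) {S : Finset E}
    (hS : ∀ e ∈ S, e ∈ C) :
    ∃ ψ ⊆ C, (∀ e ∈ S, e ∈ ψ) ∧ IsWalk src tgt p ψ p ∧
      ψ.length ≤ 2 * Fintype.card Q * S.card := by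
  classical
  induction S using Finset.induction_on with
  | empty => exact ⟨[], List.nil_subset _, by simp, rfl, by simp⟩
  | insert e S he ih =>
    obtain ⟨ψ, hψC, hSψ, hψ, hψlen⟩ := ih fun f hf => hS f (Finset.mem_insert_of_mem hf)
    obtain ⟨τ, hτC, heτ, hτ, hτlen⟩ := hC.exists_short_of_mem (hS e (Finset.mem_insert_self e S))
    refine ⟨τ ++ ψ, List.append_subset.2 ⟨hτC, hψC⟩, ?_, isWalk_append.2 ⟨p, hτ, hψ⟩, ?_⟩
    · simp only [Finset.forall_mem_insert, List.mem_append]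
      exact ⟨.inl heτ, fun f hf => .inr (hSψ f hf)⟩
    · rw [Finset.card_insert_of_notMem he, List.length_append, mul_add]
      omega

end Walk

section Fireable

variable {E ι K : Type*} [Zero K] [LT K] {l : E → ι → K} {P : Set ι} {π φ ψ C : List E}

/-- The coordinates increased by some edge of `π`. -/
def gains (l : E → ι → K) (π : List E) : Set ι := {c | ∃ e ∈ π, 0 < l e c}

/-- The coordinates decreased by some edge of `π`. -/
def losses (l : E → ι → K) (π : List E) : Set ι := {c | ∃ e ∈ π, l e c < 0}

theorem gains_append (a b : List E) : gains l (a ++ b) = gains l a ∪ gains l b := by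
  ext c
  simp [gains, or_and_right, exists_or]

theorem losses_append (a b : List E) : losses l (a ++ b) = losses l a ∪ losses l b := by
  ext c
  simp [losses, or_and_right, exists_or]

theorem gains_cons (e : E) (π : List E) : gains l (e :: π) = gains l [e] ∪ gains l π :=
  gains_append [e] π

theorem losses_cons (e : E) (π : List E) : losses l (e :: π) = losses l [e] ∪ losses l π :=
  losses_append [e] π

@[simp] theorem gains_nil : gains l [] = ∅ := by simp [gains]

@[simp] theorem losses_nil : losses l [] = ∅ := by simp [losses]

theorem gains_mono (h : φ ⊆ C) : gains l φ ⊆ gains l C :=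
  fun _ ⟨e, he, hc⟩ => ⟨e, h he, hc⟩

theorem losses_mono (h : φ ⊆ C) : losses l φ ⊆ losses l C :=
  fun _ ⟨e, he, hc⟩ => ⟨e, h he, hc⟩

/-- `Fireable l P π`: a run along `π` can start in a configuration whose set of positive
coordinates is `P`. Only signs matter, since the coefficients of a run may be arbitrarily small. -/
def Fireable (l : E → ι → K) : Set ι → List E → Prop
  | _, [] => True
  | P, e :: π => losses l [e] ⊆ P ∧ Fireable l (P ∪ gains l [e]) π

theorem Fireable.mono {P' : Set ι} (h : Fireable l P π) (hP : P ⊆ P') : Fireable l P' π := by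
  induction π generalizing P P' with
  | nil => trivial
  | cons e π ih => exact ⟨h.1.trans hP, ih h.2 (Set.union_subset_union_left _ hP)⟩

theorem fireable_append {a b : List E} :
    Fireable l P (a ++ b) ↔ Fireable l P a ∧ Fireable l (P ∪ gains l a) b := by
  induction a generalizing P with
  | nil => simp [Fireable]
  | cons e a ih => simp [Fireable, ih, gains_cons e a, Set.union_assoc, and_assoc]

theorem Fireable.of_losses_subset (h : losses l π ⊆ P) : Fireable l P π := by
  induction π generalizing P with
  | nil => trivial
  | cons e π ih =>
    rw [losses_cons, Set.union_subset_iff] at h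
    exact ⟨h.1, ih (h.2.trans Set.subset_union_left)⟩

theorem Fireable.losses_subset (h : Fireable l P π) : losses l π ⊆ P ∪ gains l π := by
  induction π generalizing P with
  | nil => simp
  | cons e π ih =>
    rw [losses_cons, gains_cons, ← Set.union_assoc]
    exact Set.union_subset (h.1.trans (Set.subset_union_left.trans Set.subset_union_left)) (ih h.2)

theorem Fireable.append_of_gains_subset (hφ : Fireable l P φ) (hC : Fireable l P C)
    (hgains : gains l C ⊆ P ∪ gains l φ) (hψ : ψ ⊆ C) : Fireable l P (φ ++ ψ) := by
  refine fireable_append.2 ⟨hφ, .of_losses_subset ?_⟩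
  calc losses l ψ ⊆ losses l C := losses_mono hψ
    _ ⊆ P ∪ gains l C := hC.losses_subset
    _ ⊆ P ∪ gains l φ := Set.union_subset Set.subset_union_left hgains

theorem exists_append_cons_of_not_gains_subset (h : ¬ gains l C ⊆ P) :
    ∃ A e B, C = A ++ e :: B ∧ gains l A ⊆ P ∧ ¬ gains l [e] ⊆ P := by
  induction C with
  | nil => simp at h
  | cons e C ih =>
    by_cases he : gains l [e] ⊆ P
    · obtain ⟨A, f, B, rfl, hA, hf⟩ := ih fun hC => h <| by
        rw [gains_cons]
        exact Set.union_subset he hC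
      exact ⟨e :: A, f, B, rfl, by rw [gains_cons]; exact Set.union_subset he hA, hf⟩
    · exact ⟨[], e, C, rfl, by simp, he⟩

variable {Q : Type*} [Fintype Q] {src tgt : E → Q} {p q : Q}

theorem IsWalk.exists_short_fireable [Finite ι] (hC : IsWalk src tgt p C q)
    (hF : Fireable l P C) :
    ∃ φ ⊆ C, IsWalk src tgt p φ q ∧ Fireable l P φ ∧ gains l C ⊆ P ∪ gains l φ ∧
      φ.length ≤ Fintype.card Q * (Pᶜ.ncard + 1) := by
  induction hn : C.length using Nat.strong_induction_on generalizing p P C with | _ n ih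
  by_cases hgains : gains l C ⊆ P
  · obtain ⟨φ, hsub, hφ, hlen⟩ := hC.exists_length_lt_card
    refine ⟨φ, hsub, hφ, ?_, hgains.trans Set.subset_union_left,
      hlen.le.trans (Nat.le_mul_of_pos_right _ (Nat.succ_pos _))⟩
    exact Fireable.append_of_gains_subset (φ := []) trivial hF (by simpa using hgains) hsub
  obtain ⟨A, e, B, rfl, hA, he⟩ := exists_append_cons_of_not_gains_subset hgains
  obtain ⟨r, hwA, hsrc, hwB⟩ := isWalk_append.1 hC
  obtain ⟨hFA, hFe, hFB⟩ := fireable_append.1 hF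
  rw [Set.union_eq_left.2 hA] at hFe hFB
  obtain ⟨A', hAsub, hwA', hAlen⟩ := hwA.exists_length_lt_card
  obtain ⟨B', hBsub, hwB', hFB', hBgains, hBlen⟩ := ih B.length (by simp [← hn]; omega) hwB hFB rfl
  have hcompl : (P ∪ gains l [e])ᶜ.ncard < Pᶜ.ncard := by
    refine Set.ncard_lt_ncard (compl_lt_compl_iff_lt.2 ?_)
    exact Set.ssubset_iff_subset_ne.2
      ⟨Set.subset_union_left, fun h => he (Set.union_eq_left.1 h.symm)⟩
  have hA'gains : gains l A' ⊆ P := (gains_mono hAsub).trans hA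
  refine ⟨A' ++ e :: B', ?_, isWalk_append.2 ⟨r, hwA', hsrc, hwB'⟩, ?_, ?_, ?_⟩
  · exact List.append_subset.2 ⟨List.subset_append_of_subset_left _ hAsub,
      List.subset_append_of_subset_right _ (List.cons_subset_cons e hBsub)⟩
  · refine fireable_append.2 ⟨?_, ?_⟩
    · exact Fireable.append_of_gains_subset (φ := []) trivial hFA (by simpa using hA) hAsub
    · rw [Set.union_eq_left.2 hA'gains]
      exact ⟨hFe, hFB'⟩
  · simp only [gains_append, gains_cons e B, gains_cons e B']
    grind
  · have := Nat.mul_le_mul_left (Fintype.card Q) hcompl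
    simp only [List.length_append, List.length_cons, Nat.succ_eq_add_one, mul_add] at *
    omega

theorem IsWalk.exists_short_cycle [DecidableEq E] [Fintype ι] [Neg K] {R : Set ι}
    (hC : IsWalk src tgt p C p) (hF : Fireable l P C) (hF' : Fireable (-l) R C.reverse) :
    ∃ χ, (∀ e, e ∈ χ ↔ e ∈ C) ∧ IsWalk src tgt p χ p ∧ Fireable l P χ ∧
      Fireable (-l) R χ.reverse ∧
      χ.length ≤ 2 * Fintype.card Q * (C.toFinset.card + Fintype.card ι + 1) := by
  obtain ⟨φ, hφC, hφ, hφF, hφgains, hφlen⟩ := hC.exists_short_fireable hF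
  obtain ⟨β, hβC, hβ, hβF, hβgains, hβlen⟩ := hC.reverse.exists_short_fireable hF'
  obtain ⟨ψ, hψC, hCψ, hψ, hψlen⟩ :=
    hC.exists_short_cycle_of_subset (S := C.toFinset) fun e => List.mem_toFinset.1
  have hncard (S : Set ι) : S.ncard ≤ Fintype.card ι := by
    simpa [Set.ncard_univ] using Set.ncard_le_ncard S.subset_univ
  refine ⟨φ ++ (ψ ++ β.reverse), fun e => ⟨?_, ?_⟩, ?_, ?_, ?_, ?_⟩
  · simp only [List.mem_append, List.mem_reverse]
    rintro (he | he | he)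
    exacts [hφC he, hψC he, List.mem_reverse.1 (hβC he)]
  · intro he
    simp [hCψ e (List.mem_toFinset.2 he)]
  · exact isWalk_append.2 ⟨p, hφ, isWalk_append.2 ⟨p, hψ, hβ.reverse⟩⟩
  · refine hφF.append_of_gains_subset hF hφgains (List.append_subset.2 ⟨hψC, fun e he => ?_⟩)
    exact List.mem_reverse.1 (hβC (List.mem_reverse.1 he))
  · rw [List.reverse_append, List.reverse_append, List.reverse_reverse, List.append_assoc]
    refine hβF.append_of_gains_subset hF' hβgains (List.append_subset.2 ⟨?_, ?_⟩)
    exacts [by simpa using hψC, by simpa using hφC]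
  · have h₁ := Nat.mul_le_mul_left (Fintype.card Q) (hncard Pᶜ)
    have h₂ := Nat.mul_le_mul_left (Fintype.card Q) (hncard Rᶜ)
    simp only [List.length_append, List.length_reverse]
    linarith

end Fireable

section Neg

variable {E ι K : Type*} [AddGroup K] [Preorder K] [AddLeftStrictMono K] {l : E → ι → K}

theorem gains_neg_reverse (π : List E) : gains (-l) π.reverse = losses l π := by
  simp [gains, losses]

theorem losses_neg_reverse (π : List E) : losses (-l) π.reverse = gains l π := by
  simp [gains, losses]

end Neg

theorem sum_map_div_count_smul {E K M : Type*} [DecidableEq E] [Fintype E]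
    [Field K] [CharZero K] [AddCommMonoid M] [Module K M] {π : List E} {w : E → K} (f : E → M)
    (hw : ∀ e ∉ π, w e = 0) :
    (π.map fun e => (w e / π.count e) • f e).sum = ∑ e, w e • f e := by
  rw [Finset.sum_list_map_count]
  refine Finset.sum_subset_zero_on_sdiff (Finset.subset_univ _) (fun e he => ?_) fun e he => ?_
  · simp [hw e (by simpa using he)]
  · have hcount : (π.count e : K) ≠ 0 :=
      Nat.cast_ne_zero.2 (List.count_pos_iff.2 (List.mem_toFinset.1 he)).ne'
    rw [← Nat.cast_smul_eq_nsmul K, smul_smul, mul_div_cancel₀ _ hcount]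

section SmallSteps

variable {E ι K : Type*} [Field K] [LinearOrder K] [IsStrictOrderedRing K] {l : E → ι → K}
  {x : ι → K} {π : List E} {e : E}

theorem exists_pos_forall_add_mul_pos {κ : Type*} [Finite κ] (u v : κ → K) {ε : K} (hε : 0 < ε) :
    ∃ α, 0 < α ∧ α ≤ ε ∧ ∀ i, 0 < u i → 0 < u i + α * v i := by
  have hbound (i : κ) : ∃ δ : Set.Ioi (0 : K), ∀ α : K, 0 < α → α ≤ δ → 0 < u i →
      0 < u i + α * v i := by
    by_cases hui : 0 < u i
    · refine ⟨⟨u i / (|v i| + 1), div_pos hui (by positivity)⟩, fun α hα hαδ _ => ?_⟩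
      rw [le_div_iff₀ (by positivity)] at hαδ
      nlinarith [neg_abs_le (v i)]
    · exact ⟨⟨1, one_pos⟩, fun _ _ _ h => absurd h hui⟩
  choose δ hδ using hbound
  obtain ⟨⟨m, hm⟩, hmδ⟩ := Finite.exists_ge δ
  exact ⟨min m ε, lt_min hm hε, min_le_right _ _,
    fun i => hδ i _ (lt_min hm hε) ((min_le_left _ _).trans (hmδ i))⟩

theorem le_add_mul_sub_of_le {m a b t : K} (ha : m ≤ a) (hb : m ≤ b) (ht₀ : 0 ≤ t) (ht₁ : t ≤ 1) :
    m ≤ a + t * (b - a) := by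
  have := mul_nonneg (sub_nonneg.2 ht₁) (sub_nonneg.2 ha)
  have := mul_nonneg ht₀ (sub_nonneg.2 hb)
  linarith

theorem exists_small_step [Finite ι] {P : Set ι} (he : losses l [e] ⊆ P) (hx : 0 ≤ x)
    (hP : P ⊆ {c | 0 < x c}) {ε : K} (hε : 0 < ε) :
    ∃ α, 0 < α ∧ α ≤ ε ∧ 0 ≤ x + α • l e ∧ P ∪ gains l [e] ⊆ {c | 0 < (x + α • l e) c} := by
  obtain ⟨α, hα, hαε, hpos⟩ := exists_pos_forall_add_mul_pos x (l e) hε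
  refine ⟨α, hα, hαε, fun c => ?_, ?_⟩
  · by_cases hc : l e c < 0
    · exact (hpos c (hP (he ⟨e, by simp, hc⟩))).le
    · exact add_nonneg (hx c) (mul_nonneg hα.le (not_lt.1 hc))
  · rintro c (hc | ⟨f, hf, hc⟩)
    · exact hpos c (hP hc)
    · obtain rfl := List.mem_singleton.1 hf
      exact add_pos_of_nonneg_of_pos (hx c) (mul_pos hα hc)

theorem eventually_sum_abs_le [Archimedean K] [Finite ι] (r : E → K) (hx : 0 ≤ x)
    (hpos : losses l π ∪ gains l π ⊆ {c | 0 < x c}) :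
    ∀ᶠ k : ℕ in Filter.atTop, ∀ c, (π.map fun e => r e * |l e c|).sum ≤ k * x c := by
  refine Filter.eventually_all.2 fun c => ?_
  by_cases hc : c ∈ losses l π ∪ gains l π
  · exact (tendsto_natCast_atTop_atTop.atTop_mul_const (hpos hc)).eventually_ge_atTop _
  · have hzero : ∀ e ∈ π, l e c = 0 := by
      intro e he
      by_contra! hne
      exact hc (hne.lt_or_gt.imp (fun h => ⟨e, he, h⟩) fun h => ⟨e, he, h⟩)
    refine Filter.Eventually.of_forall fun k => ?_
    rw [List.sum_eq_zero (List.forall_mem_map.2 fun e he => by simp [hzero e he])]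
    exact mul_nonneg k.cast_nonneg (hx c)

end SmallSteps

section Run

variable {E ι K : Type*} [DecidableEq E] [CommRing K] [LinearOrder K]
  {l : E → ι → K} {x y z : ι → K} {π a b : List E} {w v : E → K} {e : E}

/-- `Run l x π w y`: firing the edges of `π` in order, each with a coefficient in `(0, 1]`, leads
from `x` to `y` through nonnegative vectors, and `w e` is the sum of the coefficients of the
occurrences of `e` in `π`. -/
inductive Run (l : E → ι → K) : (ι → K) → List E → (E → K) → (ι → K) → Prop
  | nil {x : ι → K} : 0 ≤ x → Run l x [] 0 x
  | cons {x y : ι → K} {e : E} {π : List E} {w : E → K} {α : K} :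
      0 ≤ x → 0 < α → α ≤ 1 → Run l (x + α • l e) π w y →
      Run l x (e :: π) (Pi.single e α + w) y

namespace Run

theorem nonneg_left (h : Run l x π w y) : 0 ≤ x := by
  cases h <;> assumption

theorem nonneg_right (h : Run l x π w y) : 0 ≤ y := by
  induction h <;> assumption

theorem append (h₁ : Run l x a w y) (h₂ : Run l y b v z) : Run l x (a ++ b) (w + v) z := by
  induction h₁ with
  | nil => simpa using h₂
  | cons hx hα hα1 _ ih =>
    rw [add_assoc]
    exact cons hx hα hα1 (ih h₂)

theorem reverse (h : Run l x π w y) : Run (-l) y π.reverse w x := by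
  induction h with
  | nil hx => exact nil hx
  | @cons x y e π w α hx hα hα1 h ih =>
    have hstep : Run (-l) (x + α • l e) [e] (Pi.single e α + 0) x :=
      cons h.nonneg_left hα hα1 (by simpa using nil hx)
    rw [List.reverse_cons, add_comm]
    simpa using ih.append hstep

theorem exists_flatten_replicate {u : ι → K} (hx : 0 ≤ x) (k : ℕ)
    (h : ∀ j < k, ∃ w, Run l (x + (j : K) • u) π w (x + (j : K) • u + u)) :
    ∃ w, Run l x (List.replicate k π).flatten w (x + (k : K) • u) := by
  induction k with
  | zero => exact ⟨0, by simpa using nil (l := l) hx⟩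
  | succ k ih =>
    obtain ⟨w, hw⟩ := ih fun j hj => h j (hj.trans k.lt_succ_self)
    obtain ⟨v, hv⟩ := h k k.lt_succ_self
    refine ⟨w + v, ?_⟩
    rw [List.replicate_succ', List.flatten_append, List.flatten_singleton]
    simpa [add_smul, add_assoc] using hw.append hv

theorem weight_eq_zero (h : Run l x π w y) (he : e ∉ π) : w e = 0 := by
  induction h with
  | nil => rfl
  | cons _ _ _ _ ih =>
    rw [List.mem_cons, not_or] at he
    simp [he.1, ih he.2]

theorem eq_add_sum [Fintype E] (h : Run l x π w y) : y = x + ∑ e, w e • l e := by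
  induction h with
  | nil => simp
  | cons _ _ _ _ ih =>
    rw [ih, add_assoc]
    simp [add_smul, Finset.sum_add_distrib, Pi.single_apply]

variable [IsStrictOrderedRing K]

theorem weight_nonneg (h : Run l x π w y) : 0 ≤ w := by
  induction h with
  | nil => exact le_rfl
  | cons _ hα _ _ ih => exact add_nonneg (Pi.single_nonneg.2 hα.le) ih

theorem weight_pos (h : Run l x π w y) (he : e ∈ π) : 0 < w e := by
  induction h with
  | nil => simp at he
  | @cons x y f π w α _ hα _ h ih =>
    obtain rfl | hef := eq_or_ne e f
    · simpa using add_pos_of_pos_of_nonneg hα (h.weight_nonneg e)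
    · simpa [hef] using ih (List.mem_of_ne_of_mem hef he)

theorem fireable (h : Run l x π w y) : Fireable l {c | 0 < x c} π := by
  induction h with
  | nil => trivial
  | @cons x y e π w α _ hα _ h ih =>
    have hx' : 0 ≤ x + α • l e := h.nonneg_left
    refine ⟨?_, ih.mono fun c hc => ?_⟩
    · rintro c ⟨f, hf, hc⟩
      obtain rfl := List.mem_singleton.1 hf
      have hxc : 0 ≤ x c + α * l f c := hx' c
      have : α * l f c < 0 := mul_neg_of_pos_of_neg hα hc
      exact show 0 < x c by linarith
    · by_contra hcon
      simp only [gains, List.mem_singleton, exists_eq_left, Set.mem_union, Set.mem_ofPred_eq,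
        not_or, not_lt] at hcon
      have hxc : 0 < x c + α * l e c := hc
      have : α * l e c ≤ 0 := mul_nonpos_of_nonneg_of_nonpos hα.le hcon.2
      linarith [hcon.1]

end Run

end Run

section Pumping

variable {E ι K : Type*} [DecidableEq E] [Field K] [LinearOrder K] [IsStrictOrderedRing K]
  {l : E → ι → K} {x y z : ι → K} {π χ : List E} {w : E → K}

theorem Fireable.exists_run [Finite ι] {P : Set ι} (h : Fireable l P π) (hx : 0 ≤ x)
    (hP : P ⊆ {c | 0 < x c}) {ε : K} (hε : 0 < ε) :
    ∃ w y, Run l x π w y ∧ (∀ e, w e ≤ ε) ∧ P ∪ gains l π ⊆ {c | 0 < y c} := by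
  induction π generalizing P x ε with
  | nil => exact ⟨0, x, .nil hx, fun _ => hε.le, by simpa using hP⟩
  | cons e π ih =>
    obtain ⟨α, hα, hαmin, hx', hP'⟩ :=
      exists_small_step h.1 hx hP (lt_min (half_pos hε) one_pos)
    obtain ⟨hαε, hα1⟩ := le_min_iff.1 hαmin
    obtain ⟨w, y, hrun, hw, hy⟩ := ih h.2 hx' hP' (half_pos hε)
    refine ⟨_, y, .cons hx hα hα1 hrun, fun f => ?_, ?_⟩
    · have hsingle : (Pi.single e α : E → K) f ≤ ε / 2 := by
        rw [Pi.single_apply]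
        split_ifs
        exacts [hαε, (half_pos hε).le]
      exact (add_le_add hsingle (hw f)).trans_eq (add_halves ε)
    · rwa [gains_cons, ← Set.union_assoc]

theorem exists_run_of_sum_abs_le {r : E → K} (hpos : ∀ e ∈ π, 0 < r e) (hle : ∀ e ∈ π, r e ≤ 1)
    (hz : ∀ c, (π.map fun e => r e * |l e c|).sum ≤ z c) :
    ∃ w, Run l z π w (z + (π.map fun e => r e • l e).sum) := by
  induction π generalizing z with
  | nil => exact ⟨0, by simpa using Run.nil (l := l) (fun c => by simpa using hz c)⟩
  | cons e π ih =>
    simp only [List.forall_mem_cons, List.map_cons, List.sum_cons] at hpos hle hz ⊢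
    have hsum (c : ι) : 0 ≤ (π.map fun f => r f * |l f c|).sum := by
      refine List.sum_nonneg (List.forall_mem_map.2 fun f hf => ?_)
      exact mul_nonneg (hpos.2 f hf).le (abs_nonneg _)
    have habs (c : ι) : 0 ≤ r e * |l e c| := mul_nonneg hpos.1.le (abs_nonneg _)
    obtain ⟨w, hw⟩ := ih (z := z + r e • l e) hpos.2 hle.2 fun c => by
      have : r e * -|l e c| ≤ r e * l e c := mul_le_mul_of_nonneg_left (neg_abs_le _) hpos.1.le
      simp only [Pi.add_apply, Pi.smul_apply, smul_eq_mul]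
      linarith [hz c]
    refine ⟨_, .cons (fun c => ?_) hpos.1 hle.1 (by rwa [← add_assoc])⟩
    exact (add_nonneg (habs c) (hsum c)).trans (hz c)

theorem exists_run_flatten_replicate_of_sum_abs_le {r : E → K} {k : ℕ} (hk : 0 < k)
    (hrpos : ∀ e ∈ χ, 0 < r e) (hrle : ∀ e ∈ χ, r e ≤ k)
    (hx : ∀ c, (χ.map fun e => r e * |l e c|).sum ≤ k * x c)
    (hy : ∀ c, (χ.map fun e => r e * |l e c|).sum ≤ k * y c)
    (hxy : y = x + (χ.map fun e => r e • l e).sum) (hx₀ : 0 ≤ x) :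
    ∃ v, Run l x (List.replicate k χ).flatten v y := by
  have hk' : (0 : K) < k := Nat.cast_pos.2 hk
  set u : ι → K := (k : K)⁻¹ • (y - x) with hu
  have hku : x + (k : K) • u = y := by
    rw [hu, smul_inv_smul₀ hk'.ne', add_sub_cancel]
  have hsum : (χ.map fun e => ((k : K)⁻¹ * r e) • l e).sum = u := by
    rw [hu, hxy, add_sub_cancel_left, List.smul_sum, List.map_map]
    simp only [mul_smul, Function.comp_def]
  rw [← hku]
  refine Run.exists_flatten_replicate hx₀ k fun j hj => ?_
  rw [← hsum]
  refine exists_run_of_sum_abs_le (fun e he => mul_pos (inv_pos.2 hk') (hrpos e he))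
    (fun e he => inv_mul_le_one_of_le₀ (hrle e he) hk'.le) fun c => ?_
  have hsum_abs : (χ.map fun e => (k : K)⁻¹ * r e * |l e c|).sum =
      (k : K)⁻¹ * (χ.map fun e => r e * |l e c|).sum := by
    simp only [mul_assoc, List.sum_map_mul_left]
  have hconvex : x c + (j : K) * u c = x c + (j / k : K) * (y c - x c) := by
    simp only [hu, Pi.smul_apply, Pi.sub_apply, smul_eq_mul]
    ring
  rw [hsum, hsum_abs]
  refine (le_add_mul_sub_of_le ?_ ?_ ?_ ?_).trans_eq hconvex.symm
  exacts [(inv_mul_le_iff₀ hk').2 (hx c), (inv_mul_le_iff₀ hk').2 (hy c), by positivity,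
    (div_le_one hk').2 (Nat.cast_le.2 hj.le)]

variable [Archimedean K]

theorem exists_run_flatten_replicate_of_pos [Fintype E] [Finite ι] (hx : 0 ≤ x) (hy : 0 ≤ y)
    (hxpos : losses l χ ∪ gains l χ ⊆ {c | 0 < x c})
    (hypos : losses l χ ∪ gains l χ ⊆ {c | 0 < y c})
    (hw : ∀ e ∈ χ, 0 < w e) (hw₀ : ∀ e ∉ χ, w e = 0) (hxy : y = x + ∑ e, w e • l e) :
    ∃ k v, Run l x (List.replicate k χ).flatten v y := by
  set r : E → K := fun e => w e / χ.count e
  have hrpos : ∀ e ∈ χ, 0 < r e := fun e he =>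
    div_pos (hw e he) (Nat.cast_pos.2 (List.count_pos_iff.2 he))
  have hrle : ∀ᶠ k : ℕ in Filter.atTop, ∀ e, r e ≤ k :=
    Filter.eventually_all.2 fun e => tendsto_natCast_atTop_atTop.eventually_ge_atTop (r e)
  obtain ⟨k, hkx, hky, hkr, hk⟩ := ((eventually_sum_abs_le r hx hxpos).and
    ((eventually_sum_abs_le r hy hypos).and (hrle.and (Filter.eventually_gt_atTop 0)))).exists
  have hsum : (χ.map fun e => r e • l e).sum = ∑ e, w e • l e := sum_map_div_count_smul l hw₀
  exact ⟨k, exists_run_flatten_replicate_of_sum_abs_le hk hrpos (fun e _ => hkr e) hkx hky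
    (by rw [hsum, hxy]) hx⟩

theorem exists_run_flatten_replicate_of_fireable [Fintype E] [Finite ι] (hx : 0 ≤ x)
    (hy : 0 ≤ y)
    (hF : Fireable l {c | 0 < x c} χ) (hF' : Fireable (-l) {c | 0 < y c} χ.reverse)
    (hw : ∀ e ∈ χ, 0 < w e) (hw₀ : ∀ e ∉ χ, w e = 0) (hxy : y = x + ∑ e, w e • l e) :
    ∃ k v, Run l x (List.replicate k χ).flatten v y := by
  obtain ⟨ε, hε, -, hεw⟩ := exists_pos_forall_add_mul_pos w (fun _ => -2) one_pos
  obtain ⟨w₁, x', hrun₁, hw₁, hx'⟩ := hF.exists_run hx subset_rfl hε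
  obtain ⟨w₂, y', hrev, hw₂, hy'⟩ := hF'.exists_run hy subset_rfl hε
  have hrun₂ : Run l y' χ w₂ y := by simpa using hrev.reverse
  have hlosses : losses l χ ⊆ {c | 0 < x c} ∪ gains l χ := hF.losses_subset
  have hgains : gains l χ ⊆ {c | 0 < y c} ∪ losses l χ := by
    simpa only [gains_neg_reverse, losses_neg_reverse] using hF'.losses_subset
  rw [gains_neg_reverse] at hy'
  obtain ⟨k, v, hrun⟩ := exists_run_flatten_replicate_of_pos (l := l) (χ := χ)
    (w := w - w₁ - w₂) hrun₁.nonneg_right hrun₂.nonneg_left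
    ((Set.union_subset hlosses Set.subset_union_right).trans hx')
    ((Set.union_subset Set.subset_union_right hgains).trans hy')
    (fun e he => by
      simp only [Pi.sub_apply]
      linarith [hεw e (hw e he), hw₁ e, hw₂ e])
    (fun e he => by
      simp [hw₀ e he, hrun₁.weight_eq_zero he, hrun₂.weight_eq_zero he])
    (by
      simp only [Pi.sub_apply, sub_smul, Finset.sum_sub_distrib]
      rw [hrun₁.eq_add_sum, eq_sub_of_add_eq hrun₂.eq_add_sum.symm, hxy]
      abel)
  refine ⟨k + 1 + 1, w₁ + (v + w₂), ?_⟩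
  rw [List.replicate_succ, List.replicate_succ', List.flatten_cons, List.flatten_append,
    List.flatten_singleton]
  exact hrun₁.append (hrun.append hrun₂)

theorem exists_short_cycle_run [Finite E] [Fintype ι] {Q : Type*} [Fintype Q]
    {src tgt : E → Q} {p : Q} {C : List E} (hC : IsWalk src tgt p C p) (hrun : Run l x C w y) :
    ∃ χ, (∀ e, e ∈ χ ↔ e ∈ C) ∧ IsWalk src tgt p χ p ∧
      χ.length ≤ 2 * Fintype.card Q * (C.toFinset.card + Fintype.card ι + 1) ∧
      ∃ k v, Run l x (List.replicate k χ).flatten v y := by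
  cases nonempty_fintype E
  obtain ⟨χ, hmem, hχ, hF, hF', hlen⟩ := hC.exists_short_cycle hrun.fireable hrun.reverse.fireable
  exact ⟨χ, hmem, hχ, hlen, exists_run_flatten_replicate_of_fireable hrun.nonneg_left
    hrun.nonneg_right hF hF' (fun e he => hrun.weight_pos ((hmem e).1 he))
    (fun e he => hrun.weight_eq_zero (mt (hmem e).2 he)) hrun.eq_add_sum⟩

end Pumping

end ContinuousVASS

namespace CVASS

open ContinuousVASS

variable {d : ℕ} {V : CVASS d} {p q r : V.Q} {x y z : Fin d → ℚ} {π a b χ : List (V.Q × V.Q)}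
  {B n : ℕ}

theorem pathFrom_iff :
    V.PathFrom p π q ↔ IsWalk Prod.fst Prod.snd p π q ∧ ∀ e ∈ π, e ∈ V.T := by
  constructor
  · intro h
    induction h with
    | nil => simp [IsWalk]
    | cons hT _ ih => exact ⟨⟨rfl, ih.1⟩, List.forall_mem_cons.2 ⟨hT, ih.2⟩⟩
  · rintro ⟨hwalk, hT⟩
    induction π generalizing p with
    | nil =>
      obtain rfl : p = q := hwalk
      exact .nil p
    | cons e π ih =>
      obtain ⟨rfl, hwalk⟩ := hwalk
      rw [List.forall_mem_cons] at hT
      exact .cons hT.1 (ih hwalk hT.2)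

theorem nnRunFrom_iff :
    V.NNRunFrom p x π q y ↔ V.PathFrom p π q ∧ ∃ w, Run V.label x π w y := by
  constructor
  · intro h
    induction h with
    | nil p x hx => exact ⟨.nil p, 0, .nil hx⟩
    | cons hT hx hα hα1 _ ih =>
      obtain ⟨hpath, w, hw⟩ := ih
      exact ⟨.cons hT hpath, _, .cons hx hα hα1 hw⟩
  · rintro ⟨hpath, w, hw⟩
    induction hpath generalizing x w with
    | nil p =>
      cases hw with | nil hx => exact .nil p _ hx
    | cons hT _ ih =>
      cases hw with | cons hx hα hα1 hw => exact .cons hT hx hα hα1 (ih _ hw)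

namespace NNRunFrom

theorem pathFrom (h : V.NNRunFrom p x π q y) : V.PathFrom p π q :=
  (nnRunFrom_iff.1 h).1

theorem append (h₁ : V.NNRunFrom p x a q y) (h₂ : V.NNRunFrom q y b r z) :
    V.NNRunFrom p x (a ++ b) r z := by
  induction h₁ with
  | nil => exact h₂
  | cons hT hx hα hα1 _ ih => exact .cons hT hx hα hα1 (ih h₂)

theorem nonneg_left (h : V.NNRunFrom p x π q y) : ∀ i, 0 ≤ x i := by
  cases h <;> assumption

theorem nonneg_right (h : V.NNRunFrom p x π q y) : ∀ i, 0 ≤ y i := by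
  induction h <;> assumption

theorem exists_append_of_mem (h : V.NNRunFrom p x π q y) (hr : r ∈ pathStates p π) :
    ∃ a b z, π = a ++ b ∧ V.NNRunFrom p x a r z ∧ V.NNRunFrom r z b q y ∧
      r ∉ b.map Prod.snd := by
  induction h with
  | nil p x hx =>
    obtain rfl : r = p := by simpa [pathStates] using hr
    exact ⟨[], [], _, rfl, .nil r _ hx, .nil r _ hx, by simp⟩
  | @cons p p' q x y α π hT hx hα hα1 h ih =>
    by_cases hmem : r ∈ pathStates p' π
    · obtain ⟨a, b, z, rfl, ha, hb, hrb⟩ := ih hmem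
      exact ⟨(p, p') :: a, b, z, rfl, .cons hT hx hα hα1 ha, hb, hrb⟩
    · obtain rfl : r = p := by simp_all [pathStates]
      exact ⟨[], _, x, rfl, .nil r x hx, .cons hT hx hα hα1 h, hmem⟩

theorem exists_short_cycle (h : V.NNRunFrom p x π p y) (hπ : π ≠ []) :
    ∃ χ k, V.PathFrom p χ p ∧ χ ≠ [] ∧
      χ.length ≤ 2 * Fintype.card V.Q * (V.T.card + d + 1) ∧
      V.NNRunFrom p x (List.replicate k χ).flatten p y := by
  obtain ⟨hpath, w, hw⟩ := nnRunFrom_iff.1 h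
  obtain ⟨hwalk, hT⟩ := pathFrom_iff.1 hpath
  obtain ⟨χ, hmem, hχ, hlen, k, v, hv⟩ := exists_short_cycle_run hwalk hw
  have hχT : ∀ e ∈ χ, e ∈ V.T := fun e he => hT e ((hmem e).1 he)
  obtain ⟨e, he⟩ := List.exists_mem_of_ne_nil π hπ
  have hcard : π.toFinset.card ≤ V.T.card :=
    Finset.card_le_card fun e he => hT e (List.mem_toFinset.1 he)
  refine ⟨χ, k, pathFrom_iff.2 ⟨hχ, hχT⟩, List.ne_nil_of_mem ((hmem e).2 he), ?_, ?_⟩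
  · rw [Fintype.card_fin] at hlen
    exact hlen.trans (by gcongr)
  · refine nnRunFrom_iff.2 ⟨pathFrom_iff.2 ⟨hχ.flatten_replicate k, fun e he => ?_⟩, v, hv⟩
    obtain ⟨_, hχ', heχ⟩ := List.mem_flatten.1 he
    exact hχT e ((List.eq_of_mem_replicate hχ') ▸ heχ)

end NNRunFrom

/-- `V.LPSRunFrom B n p x π₀ q y`: there is a nonnegative run from `p(x)` to `q(y)` along a path
`π₀ χ₁^{k₁} π₁ ⋯ χₙ^{kₙ} πₙ` with simple paths `πᵢ` and nonempty cycles `χᵢ` of length at most `B`.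
The first path is exposed because the scheme is built from its end. -/
inductive LPSRunFrom (V : CVASS d) (B : ℕ) :
    ℕ → V.Q → (Fin d → ℚ) → List (V.Q × V.Q) → V.Q → (Fin d → ℚ) → Prop
  | path {p q : V.Q} {x y : Fin d → ℚ} {π : List (V.Q × V.Q)} :
      SimplePath p π → V.NNRunFrom p x π q y → LPSRunFrom V B 0 p x π q y
  | cycle {p q r : V.Q} {x y z z' : Fin d → ℚ} {π₀ π₁ χ : List (V.Q × V.Q)} {n k : ℕ} :
      SimplePath p π₀ → V.NNRunFrom p x π₀ r z →
      V.PathFrom r χ r → χ ≠ [] → χ.length ≤ B →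
      V.NNRunFrom r z (List.replicate k χ).flatten r z' →
      LPSRunFrom V B n r z' π₁ q y → LPSRunFrom V B (n + 1) p x π₀ q y

theorem LPSRunFrom.cons {α : ℚ} (h : V.LPSRunFrom B n r (x + α • V.label (p, r)) π q y)
    (hT : (p, r) ∈ V.T) (hx : ∀ i, 0 ≤ x i) (hα : 0 < α) (hα1 : α ≤ 1)
    (hp : p ∉ pathStates r π) : V.LPSRunFrom B n p x ((p, r) :: π) q y := by
  have hsimple (hπ : SimplePath r π) : SimplePath p ((p, r) :: π) := List.nodup_cons.2 ⟨hp, hπ⟩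
  cases h with
  | path hπ hrun => exact .path (hsimple hπ) (.cons hT hx hα hα1 hrun)
  | cycle hπ hrun hχ hne hlen hcycle hrest =>
    exact .cycle (hsimple hπ) (.cons hT hx hα hα1 hrun) hχ hne hlen hcycle hrest

theorem NNRunFrom.exists_lpsRunFrom {S : Finset V.Q} (h : V.NNRunFrom p x π q y)
    (hS : ∀ r ∈ pathStates p π, r ∈ S) :
    ∃ n ≤ S.card, ∃ π₀, (∀ r ∈ pathStates p π₀, r ∈ S) ∧
      V.LPSRunFrom (2 * Fintype.card V.Q * (V.T.card + d + 1)) n p x π₀ q y := by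
  induction S using Finset.strongInduction generalizing p x π with | H S ih
  have hpS : p ∈ S := hS p List.mem_cons_self
  obtain ⟨a, b, z, rfl, ha, hb, hpb⟩ := h.exists_append_of_mem (List.mem_cons_self (a := p))
  have htail : ∃ n < S.card, ∃ π₀, (∀ r ∈ pathStates p π₀, r ∈ S) ∧
      V.LPSRunFrom (2 * Fintype.card V.Q * (V.T.card + d + 1)) n p z π₀ q y := by
    cases hb with
    | nil =>
      exact ⟨0, Finset.card_pos.2 ⟨_, hpS⟩, [], by simpa [pathStates] using hpS,
        .path (List.nodup_singleton _) (.nil _ _ ha.nonneg_right)⟩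
    | @cons _ p' _ _ _ α b hT hz hα hα1 hb =>
      have hbS : ∀ r ∈ pathStates p' b, r ∈ S.erase p := fun r hr =>
        Finset.mem_erase.2 ⟨fun hrp => hpb (hrp ▸ hr), hS r (by simp_all [pathStates])⟩
      obtain ⟨n, hn, π₀, hπ₀, hrun⟩ := ih _ (Finset.erase_ssubset hpS) hb hbS
      refine ⟨n, hn.trans_lt (Finset.card_erase_lt_of_mem hpS), (p, p') :: π₀, ?_,
        hrun.cons hT hz hα hα1 fun hp => Finset.notMem_erase p S (hπ₀ p hp)⟩
      exact List.forall_mem_cons.2 ⟨hpS, fun r hr => Finset.mem_of_mem_erase (hπ₀ r hr)⟩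
  obtain ⟨n, hn, π₀, hπ₀, hrun⟩ := htail
  obtain rfl | hne := eq_or_ne a []
  · cases ha
    exact ⟨n, hn.le, π₀, hπ₀, hrun⟩
  · obtain ⟨χ, k, hχ, hχne, hlen, hcycle⟩ := ha.exists_short_cycle hne
    exact ⟨n + 1, hn, [], by simpa [pathStates] using hpS,
      .cycle (List.nodup_singleton p) (.nil p x ha.nonneg_left) hχ hχne hlen hcycle hrun⟩

/-- `V.IsSimpleLPS B p q s πs χs`: the paths `πs` and cycles `χs` form a linear path scheme from
`p` to `q` whose paths are simple and whose cycles are nonempty and have length at most `B`.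
The `i`-th path leads from `s i` to `s (i + 1)`, and the `i`-th cycle is attached to
`s (i + 1)`. -/
structure IsSimpleLPS (V : CVASS d) (B : ℕ) (p q : V.Q) (s : Fin (n + 2) → V.Q)
    (πs : Fin (n + 1) → List (V.Q × V.Q)) (χs : Fin n → List (V.Q × V.Q)) : Prop where
  head_eq : s 0 = p
  last_eq : s (Fin.last (n + 1)) = q
  pathFrom : ∀ i : Fin (n + 1), V.PathFrom (s i.castSucc) (πs i) (s i.succ)
  simplePath : ∀ i : Fin (n + 1), SimplePath (s i.castSucc) (πs i)
  cycle : ∀ i : Fin n, V.PathFrom (s i.succ.castSucc) (χs i) (s i.succ.castSucc) ∧ χs i ≠ []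
  length_le : ∀ i : Fin n, (χs i).length ≤ B

theorem IsSimpleLPS.of_simplePath (hπ : V.PathFrom p π q) (hsimple : SimplePath p π) :
    V.IsSimpleLPS B p q ![p, q] ![π] ![] where
  head_eq := rfl
  last_eq := rfl
  pathFrom := by simpa using hπ
  simplePath := by simpa using hsimple
  cycle i := i.elim0
  length_le i := i.elim0

theorem IsSimpleLPS.cons {s : Fin (n + 2) → V.Q} {πs : Fin (n + 1) → List (V.Q × V.Q)}
    {χs : Fin n → List (V.Q × V.Q)} (h : V.IsSimpleLPS B r q s πs χs)
    (hπ : V.PathFrom p π r) (hsimple : SimplePath p π) (hχ : V.PathFrom r χ r) (hne : χ ≠ [])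
    (hlen : χ.length ≤ B) :
    V.IsSimpleLPS B p q (Fin.cons p s) (Fin.cons π πs) (Fin.cons χ χs) where
  head_eq := rfl
  last_eq := by rw [← Fin.succ_last, Fin.cons_succ, h.last_eq]
  pathFrom := by
    refine Fin.cases ?_ fun i => ?_
    · simpa [h.head_eq] using hπ
    · simpa [← Fin.succ_castSucc] using h.pathFrom i
  simplePath := by
    refine Fin.cases hsimple fun i => ?_
    simpa [← Fin.succ_castSucc] using h.simplePath i
  cycle := by
    refine Fin.cases ?_ fun i => ?_
    · simpa [← Fin.succ_castSucc, h.head_eq] using ⟨hχ, hne⟩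
    · simpa [← Fin.succ_castSucc] using h.cycle i
  length_le := Fin.cases hlen h.length_le

theorem lpsConcat_cons {Q : Type} {π χ : List (Q × Q)} {πs : Fin (n + 1) → List (Q × Q)}
    {χs : Fin n → List (Q × Q)} {k : ℕ} {ks : Fin n → ℕ} :
    lpsConcat (n := n + 1) (Fin.cons π πs) (Fin.cons χ χs) (Fin.cons k ks) =
      π ++ ((List.replicate k χ).flatten ++ lpsConcat πs χs ks) := by
  simp [lpsConcat, List.ofFn_succ]

theorem LPSRunFrom.exists_isSimpleLPS (h : V.LPSRunFrom B n p x π q y) :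
    ∃ (s : Fin (n + 2) → V.Q) (πs : Fin (n + 1) → List (V.Q × V.Q))
      (χs : Fin n → List (V.Q × V.Q)),
      V.IsSimpleLPS B p q s πs χs ∧
      ∃ ks : Fin n → ℕ, V.NNRunFrom p x (lpsConcat πs χs ks) q y := by
  induction h with
  | path hsimple hrun =>
    exact ⟨_, _, _, .of_simplePath hrun.pathFrom hsimple, ![], by simpa [lpsConcat] using hrun⟩
  | @cycle _ _ _ _ _ _ _ _ _ _ _ k hsimple hrun hχ hne hlen hcycle _ ih =>
    obtain ⟨s, πs, χs, hlps, ks, hrest⟩ := ih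
    refine ⟨_, _, _, hlps.cons hrun.pathFrom hsimple hχ hne hlen, Fin.cons k ks, ?_⟩
    rw [lpsConcat_cons]
    exact hrun.append (hcycle.append hrest)

end CVASS

theorem short_lps_suffice_nonneg_general {d : ℕ} (V : CVASS d) {p q : V.Q}
    {x y : Fin d → ℚ} {π : List (V.Q × V.Q)} (hrun : V.NNRunFrom p x π q y) :
    ∃ n ≤ Fintype.card V.Q, ∃ (s : Fin (n + 2) → V.Q) (πs : Fin (n + 1) → List (V.Q × V.Q))
      (χs : Fin n → List (V.Q × V.Q)),
      V.IsSimpleLPS (2 * Fintype.card V.Q * (V.T.card + d + 1)) p q s πs χs ∧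
      ∃ ks : Fin n → ℕ, V.NNRunFrom p x (lpsConcat πs χs ks) q y := by
  obtain ⟨n, hn, π₀, -, hlps⟩ := hrun.exists_lpsRunFrom fun r _ => Finset.mem_univ r
  exact ⟨n, hn, hlps.exists_isSimpleLPS⟩

/-- short linear path schemes suffice for ℚ≥0VASS
reachability. If `p(x) →^π q(y)` in the nonnegative semantics, then there is
a linear path scheme `σ = π₀ χ₁* π₁ ⋯ χₙ* πₙ` from `p` to `q` with `n ≤ |Q|`,
simple paths `πs`, cycles of length at most
`4·|Q|·(|T| + d + 2)·(d·|T|^(d+1) + 1)`, and `y ∈ Reach^x_{≥0}(σ)`. -/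
theorem short_lps_suffice_nonneg {d : ℕ} (V : CVASS d) (p q : V.Q)
    (x y : Fin d → ℚ) (hx : ∀ i, 0 ≤ x i) (hy : ∀ i, 0 ≤ y i)
    (π : List (V.Q × V.Q)) (hπ : V.PathFrom p π q)
    (hrun : V.NNRunFrom p x π q y) :
    ∃ (n : ℕ) (s : Fin (n + 2) → V.Q) (πs : Fin (n + 1) → List (V.Q × V.Q))
      (χs : Fin n → List (V.Q × V.Q)),
      n ≤ Fintype.card V.Q ∧
      s 0 = p ∧ s (Fin.last (n + 1)) = q ∧
      (∀ i : Fin (n + 1), V.PathFrom (s i.castSucc) (πs i) (s i.succ)) ∧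
      (∀ i : Fin (n + 1), SimplePath (s i.castSucc) (πs i)) ∧
      (∀ i : Fin n, V.PathFrom (s i.succ.castSucc) (χs i) (s i.succ.castSucc) ∧
        χs i ≠ []) ∧
      (∀ i : Fin n, (χs i).length ≤
        4 * Fintype.card V.Q * (V.T.card + d + 2) * (d * V.T.card ^ (d + 1) + 1)) ∧
      (∃ ks : Fin n → ℕ, V.NNRunFrom p x (lpsConcat πs χs ks) q y) := by
  obtain ⟨n, hn, s, πs, χs, hlps, hreach⟩ := short_lps_suffice_nonneg_general V hrun
  have hbound : 2 * Fintype.card V.Q * (V.T.card + d + 1) ≤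
      4 * Fintype.card V.Q * (V.T.card + d + 2) * (d * V.T.card ^ (d + 1) + 1) :=
    calc 2 * Fintype.card V.Q * (V.T.card + d + 1)
        ≤ 4 * Fintype.card V.Q * (V.T.card + d + 2) := by gcongr <;> norm_num
      _ ≤ _ := Nat.le_mul_of_pos_right _ (Nat.succ_pos _)
  exact ⟨n, s, πs, χs, hn, hlps.head_eq, hlps.last_eq, hlps.pathFrom, hlps.simplePath, hlps.cycle,
    fun i => (hlps.length_le i).trans hbound, hreach⟩
end

section
/- Let u ∈ ℚ^d, let c : Fin n → ℚ with c i ≥ 0 for all i, and set g i = c i • u. Then {∑_i a_i • g i | a : Fin n → ℚ, ∀ i, 0 < a_i ≤ 1} = {t • (∑_i g i) | t ∈ ℚ, 0 < t ≤ 1}. (Core grouping fact behind Lemma 3 and the construction of G_M: a family of vectors lying on one common ray, taken each with a coefficient in (0,1], has the same set of reachable sums as their total sum taken with a single coefficient in (0,1].) -/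
/-!
Each combination `∑ i, a i • g i` is `(∑ i, c i * a i) • u`, and `∑ i, c i * a i` is the total
weight `∑ i, c i` times the weighted average of the coefficients `a i`. Averages of points of a
convex set stay in the set, so `t` can be taken to be this average; when all weights vanish, any
`t` works.
-/

section

variable {ι K E : Type*} [Field K] [LinearOrder K] [IsStrictOrderedRing K]

theorem exists_mem_sum_smul_eq_sum_smul_of_convex [AddCommGroup E] [Module K E] {S : Set E}
    (hS : Convex K S) (hne : S.Nonempty) {s : Finset ι} {w : ι → K} {z : ι → E}
    (hw : ∀ i ∈ s, 0 ≤ w i) (hz : ∀ i ∈ s, z i ∈ S) :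
    ∃ y ∈ S, ∑ i ∈ s, w i • z i = (∑ i ∈ s, w i) • y := by
  rcases (Finset.sum_nonneg hw).eq_or_lt' with hzero | hpos
  · obtain ⟨y, hy⟩ := hne
    have hw_zero : ∀ i ∈ s, w i = 0 := (Finset.sum_eq_zero_iff_of_nonneg hw).mp hzero
    refine ⟨y, hy, ?_⟩
    rw [hzero, zero_smul]
    exact Finset.sum_eq_zero fun i hi => by rw [hw_zero i hi, zero_smul]
  · exact ⟨s.centerMass w z, hS.centerMass_mem hw hpos hz, (smul_inv_smul₀ hpos.ne' _).symm⟩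

theorem ray_grouping_general [Fintype ι] [AddCommMonoid E] [Module K E] {S : Set K}
    (hS : Convex K S) (hne : S.Nonempty) (u : E) (c : ι → K) (hc : ∀ i, 0 ≤ c i)
    (g : ι → E) (hg : ∀ i, g i = c i • u) :
    {x : E | ∃ a : ι → K, (∀ i, a i ∈ S) ∧ x = ∑ i, a i • g i} =
      {x : E | ∃ t ∈ S, x = t • ∑ i, g i} := by
  obtain rfl : g = fun i => c i • u := funext hg
  ext x
  constructor
  · rintro ⟨a, ha, rfl⟩
    obtain ⟨t, ht, hsum⟩ := exists_mem_sum_smul_eq_sum_smul_of_convex hS hne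
      (s := Finset.univ) (fun i _ => hc i) (fun i _ => ha i)
    refine ⟨t, ht, ?_⟩
    calc
      ∑ i, a i • c i • u = (∑ i, c i • a i) • u := by
        simp only [Finset.sum_smul, smul_assoc, smul_comm (c _)]
      _ = ((∑ i, c i) • t) • u := by rw [hsum]
      _ = t • ∑ i, c i • u := by rw [smul_assoc, smul_comm, Finset.sum_smul]
  · rintro ⟨t, ht, rfl⟩
    exact ⟨fun _ => t, fun _ => ht, Finset.smul_sum⟩

end

/-- grouping collinear vectors on a common ray. If
`g i = c i • u` with `c i ≥ 0`, then the set of combinations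
`∑ i, a i • g i` with all `a i ∈ (0,1]` equals the set of multiples
`t • (∑ i, g i)` with `t ∈ (0,1]`. -/
theorem ray_grouping (d n : ℕ) (u : Fin d → ℚ) (c : Fin n → ℚ)
    (hc : ∀ i, 0 ≤ c i) (g : Fin n → (Fin d → ℚ)) (hg : ∀ i, g i = c i • u) :
    {x : Fin d → ℚ | ∃ a : Fin n → ℚ, (∀ i, 0 < a i ∧ a i ≤ 1) ∧
        x = ∑ i, a i • g i} =
      {x : Fin d → ℚ | ∃ t : ℚ, 0 < t ∧ t ≤ 1 ∧ x = t • ∑ i, g i} := by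
  simpa only [Set.mem_Ioc, and_assoc] using
    ray_grouping_general (convex_Ioc 0 1) (Set.nonempty_Ioc.mpr one_pos) u c hc g hg
end

section
/- Let G, G' ⊆ ℝ^d be finite sets with span(G) = span(G'). Then (relint(cone(G)) ∪ {0}) + (relint(cone(G')) ∪ {0}) = relint(cone(G ∪ G')) ∪ {0}, where + denotes Minkowski sum. (Key step in the proof of Theorem 3: the reachability sets of two cycles whose label sets have the same span combine into a single cone term.) -/
open Pointwise

/-- The convex cone of a finite set `G ⊆ ℝ^d`: all nonnegative combinations
of elements of `G`. -/
def coneF {d : ℕ} (G : Finset (Fin d → ℝ)) : Set (Fin d → ℝ) :=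
  {x | ∃ a : (Fin d → ℝ) → ℝ, (∀ v ∈ G, 0 ≤ a v) ∧ x = ∑ v ∈ G, a v • v}

/-!
Inside the common linear span the relative interiors are interiors. For convex cones `C`, `D` with
nonempty interior, `interior (C + D) = interior C + interior D`: an interior point of `C + D` stays
in `C + D` after subtracting a small multiple of `g + h`, where `g` and `h` are interior to `C` and
`D`, and adding this multiple back moves each summand into the interior of its cone. Since
`interior C` and `interior D` both lie in `interior (C + D)`, adjoining `0` to each summand only
adds the point `0` to the sum.
-/

open Set Filter Topology Submodule

lemma smul_mem_interior_pointedCone {E : Type*} [AddCommGroup E] [Module ℝ E]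
    [TopologicalSpace E] [ContinuousConstSMul ℝ E] (C : PointedCone ℝ E) {t : ℝ} (ht : 0 < t)
    {x : E} (hx : x ∈ interior (C : Set E)) : t • x ∈ interior (C : Set E) :=
  (isOpenMap_smul₀ ht.ne').mapsTo_interior (fun _ hy ↦ C.smul_mem ht.le hy) hx

section Interior

variable {E : Type*} [AddCommGroup E] [TopologicalSpace E] [IsTopologicalAddGroup E] [Module ℝ E]

lemma add_mem_interior_pointedCone (C : PointedCone ℝ E) {x y : E} (hx : x ∈ C)
    (hy : y ∈ interior (C : Set E)) : x + y ∈ interior (C : Set E) := by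
  have hC_add : (C : Set E) + C = C := by rw [← coe_sup, sup_idem]
  exact hC_add ▸ subset_interior_add_right (add_mem_add hx hy)

variable [ContinuousSMul ℝ E] {C D : PointedCone ℝ E}

theorem interior_coe_sup_pointedCone (hC : (interior (C : Set E)).Nonempty)
    (hD : (interior (D : Set E)).Nonempty) :
    interior ((C ⊔ D : PointedCone ℝ E) : Set E) = interior (C : Set E) + interior (D : Set E) := by
  refine Subset.antisymm (fun x hx ↦ ?_) ?_
  · obtain ⟨g, hg⟩ := hC
    obtain ⟨h, hh⟩ := hD
    have tendsto_sub_smul : Tendsto (fun t : ℝ ↦ x - t • (g + h)) (𝓝[>] 0) (𝓝 x) := by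
      have : Continuous fun t : ℝ ↦ x - t • (g + h) := by fun_prop
      simpa using this.continuousWithinAt (s := Ioi 0) (x := 0) |>.tendsto
    obtain ⟨t, ht_mem, ht⟩ :=
      ((tendsto_sub_smul.eventually (mem_interior_iff_mem_nhds.1 hx)).and
        self_mem_nhdsWithin).exists
    obtain ⟨y, hy, z, hz, hyz⟩ := mem_sup.1 ht_mem
    refine ⟨y + t • g,
      add_mem_interior_pointedCone C hy (smul_mem_interior_pointedCone C ht hg),
      z + t • h,
      add_mem_interior_pointedCone D hz (smul_mem_interior_pointedCone D ht hh), ?_⟩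
    calc y + t • g + (z + t • h) = y + z + t • (g + h) := by module
      _ = x := by rw [hyz, sub_add_cancel]
  · rw [coe_sup]
    exact (add_subset_add_left interior_subset).trans subset_interior_add_left

theorem interior_union_zero_add_pointedCone (hC : (interior (C : Set E)).Nonempty)
    (hD : (interior (D : Set E)).Nonempty) :
    (interior (C : Set E) ∪ {0}) + (interior (D : Set E) ∪ {0}) =
      interior ((C ⊔ D : PointedCone ℝ E) : Set E) ∪ {0} := by
  have hC_sup : interior (C : Set E) ⊆ interior (C ⊔ D : PointedCone ℝ E) :=
    interior_mono (SetLike.coe_subset_coe.2 le_sup_left)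
  have hD_sup : interior (D : Set E) ⊆ interior (C ⊔ D : PointedCone ℝ E) :=
    interior_mono (SetLike.coe_subset_coe.2 le_sup_right)
  rw [union_add, add_union, add_union, ← interior_coe_sup_pointedCone hC hD]
  simp only [singleton_zero, add_zero, zero_add]
  grind

end Interior

section RelativeInterior

variable {E : Type*} [AddCommGroup E] [Module ℝ E]

lemma affineSpan_pointedCone (C : PointedCone ℝ E) :
    affineSpan ℝ (C : Set E) = (span ℝ (C : Set E)).toAffineSubspace := by
  refine SetLike.coe_injective ?_
  rw [← insert_eq_of_mem C.zero_mem, affineSpan_insert_zero, span_insert_zero]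
  rfl

lemma span_coe_sup_pointedCone (C D : PointedCone ℝ E) :
    span ℝ ((C ⊔ D : PointedCone ℝ E) : Set E) = span ℝ (C : Set E) ⊔ span ℝ (D : Set E) := by
  have sup_eq_hull : C ⊔ D = PointedCone.hull ℝ (C ∪ D : Set E) := by
    rw [PointedCone.hull, span_union, span_eq, span_eq]
  rw [sup_eq_hull, span_span_of_tower, span_union]

variable [TopologicalSpace E]

lemma intrinsicInterior_pointedCone_eq_image (C : PointedCone ℝ E) {L : Submodule ℝ E}
    (hL : span ℝ (C : Set E) = L) :
    intrinsicInterior ℝ (C : Set E) = L.subtype '' interior (C.comap L.subtype : Set L) := by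
  subst hL
  rw [intrinsicInterior, affineSpan_pointedCone]
  rfl

variable [IsTopologicalAddGroup E] [ContinuousSMul ℝ E]

theorem relint_cone_union_zero_add_general {C D : PointedCone ℝ E}
    (hC : (intrinsicInterior ℝ (C : Set E)).Nonempty)
    (hD : (intrinsicInterior ℝ (D : Set E)).Nonempty)
    (hspan : span ℝ (C : Set E) = span ℝ (D : Set E)) :
    (intrinsicInterior ℝ (C : Set E) ∪ {0}) + (intrinsicInterior ℝ (D : Set E) ∪ {0}) =
      intrinsicInterior ℝ ((C ⊔ D : PointedCone ℝ E) : Set E) ∪ {0} := by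
  set L := span ℝ (D : Set E)
  have span_sup : span ℝ ((C ⊔ D : PointedCone ℝ E) : Set E) = L := by
    rw [span_coe_sup_pointedCone, hspan, sup_idem]
  have comap_sup : (C ⊔ D).comap L.subtype = C.comap L.subtype ⊔ D.comap L.subtype :=
    comap_sup_of_injective L.subtype_injective
      (fun x hx ↦ ⟨⟨x, hspan ▸ subset_span hx⟩, rfl⟩) fun x hx ↦ ⟨⟨x, subset_span hx⟩, rfl⟩
  rw [intrinsicInterior_pointedCone_eq_image C hspan] at hC ⊢
  rw [intrinsicInterior_pointedCone_eq_image D rfl] at hD ⊢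
  rw [intrinsicInterior_pointedCone_eq_image _ span_sup, comap_sup]
  simpa only [image_union, image_add, image_singleton, map_zero] using
    congrArg (L.subtype '' ·) (interior_union_zero_add_pointedCone hC.of_image hD.of_image)

end RelativeInterior

lemma intrinsicInterior_pointedCone_nonempty {E : Type*} [NormedAddCommGroup E]
    [NormedSpace ℝ E] [FiniteDimensional ℝ E] (C : PointedCone ℝ E) :
    (intrinsicInterior ℝ (C : Set E)).Nonempty :=
  Set.Nonempty.intrinsicInterior C.convex ⟨0, C.zero_mem⟩

lemma coneF_eq_hull {d : ℕ} (G : Finset (Fin d → ℝ)) :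
    coneF G = (PointedCone.hull ℝ (G : Set (Fin d → ℝ)) : Set (Fin d → ℝ)) := by
  ext x
  constructor
  · rintro ⟨a, ha, rfl⟩
    exact sum_mem fun v hv ↦ (PointedCone.hull ℝ _).smul_mem (ha v hv) (subset_span hv)
  · intro hx
    obtain ⟨a, -, rfl⟩ := mem_span_finset.1 hx
    exact ⟨fun v ↦ a v, fun v _ ↦ (a v).2, rfl⟩

/-- key step in Theorem 3. For finite sets `G, G' ⊆ ℝ^d`
with the same linear span,
`(relint(cone(G)) ∪ {0}) + (relint(cone(G')) ∪ {0})
  = relint(cone(G ∪ G')) ∪ {0}` (Minkowski sum). -/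
theorem relint_cone_union_zero_add (d : ℕ) (hd : 1 ≤ d)
    [DecidableEq (Fin d → ℝ)] (G G' : Finset (Fin d → ℝ))
    (hspan : Submodule.span ℝ (G : Set (Fin d → ℝ)) =
      Submodule.span ℝ (G' : Set (Fin d → ℝ))) :
    (intrinsicInterior ℝ (coneF G) ∪ {0}) +
        (intrinsicInterior ℝ (coneF G') ∪ {0}) =
      intrinsicInterior ℝ (coneF (G ∪ G')) ∪ {0} := by
  simp only [coneF_eq_hull, Finset.coe_union, span_union]
  exact relint_cone_union_zero_add_general (intrinsicInterior_pointedCone_nonempty _)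
    (intrinsicInterior_pointedCone_nonempty _) (by simpa only [span_span_of_tower] using hspan)
end
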